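/- arXiv:1404.2907 — 8 statements merged into one kernel-verified Lean document; each statement's English description precedes it below -/
import Mathlib

section
/- Let (α₁, α₂) ∈ ℝ² be a point on the unit circle (α₁² + α₂² = 1) with (α₁, α₂) ∉ ℚ², and let ε > 0. Then there exist infinitely many triples (Q, A₁, A₂) of integers with Q ≥ 1 and A₁² + A₂² = Q² such that √((α₁ − A₁/Q)² + (α₂ − A₂/Q)²) < (1 + ε)/(√2 · Q). -/
/-- A crossed edge of the tessellation. -/
def PSt (c s A B : ℝ) (σ a b m n : ℤ) : Prop :=
  σ ^ 2 = 1 ∧ (a * (m - n) - b * (m + n)) ^ 2 = 1 ∧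
  0 < (a : ℝ) * c + b * s ∧ 0 < ((m + n : ℤ) : ℝ) * c + ((m - n : ℤ) : ℝ) * s ∧
  A = σ * ((a : ℝ) * s - b * c) ∧
  B = -σ * (((m + n : ℤ) : ℝ) * s - ((m - n : ℤ) : ℝ) * c) ∧ 0 < A ∧ 0 < B

def PE (c s A B : ℝ) : Prop := ∃ σ a b m n : ℤ, PSt c s A B σ a b m n

def Irr (c s : ℝ) : Prop := ∀ q p : ℤ, 0 < (q : ℝ) * c + p * s → (q : ℝ) * s - p * c ≠ 0

theorem floor_ex (A B : ℝ) (hA : 0 < A) (h : A < B) :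
    ∃ k : ℤ, 1 ≤ k ∧ (k : ℝ) * A ≤ B ∧ B < (k + 1) * A := by
  refine ⟨⌊B / A⌋, ?_, ?_, ?_⟩
  · rw [Int.le_floor, le_div_iff₀ hA]; push_cast; linarith
  · rw [← le_div_iff₀ hA]; exact Int.floor_le _
  · rw [← div_lt_iff₀ hA]; exact Int.lt_floor_add_one _

theorem sig_ne {σ : ℤ} (h : σ ^ 2 = 1) : (σ : ℝ) ≠ 0 := by
  intro h0
  have : σ = 0 := by exact_mod_cast h0
  subst this; norm_num at h

theorem step1 {c s A B : ℝ} (hI : Irr c s) (h : PE c s A B) (hAB : 2 * A < B) :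
    ∃ B', PE c s A B' ∧ B' < 2 * A ∧ B' ≤ B / 2 := by
  obtain ⟨σ, a, b, m, n, h1, h2, h3, h4, h5, h6, h7, h8⟩ := h
  obtain ⟨k, hk, hk1, hk2⟩ := floor_ex (2 * A) B (by linarith) hAB
  have hkr : (1 : ℝ) ≤ k := by exact_mod_cast hk
  have hx : 0 < (((m + k * (a + b)) + (n + k * (a - b)) : ℤ) : ℝ) * c +
      (((m + k * (a + b)) - (n + k * (a - b)) : ℤ) : ℝ) * s := by
    have : 0 < 2 * (k : ℝ) * ((a : ℝ) * c + b * s) := by positivity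
    push_cast at h4 ⊢
    nlinarith
  have hB : B - k * (2 * A) = -σ * ((((m + k * (a + b)) + (n + k * (a - b)) : ℤ) : ℝ) * s -
      (((m + k * (a + b)) - (n + k * (a - b)) : ℤ) : ℝ) * c) := by
    rw [h5, h6]; push_cast; ring
  refine ⟨B - k * (2 * A), ⟨σ, a, b, m + k * (a + b), n + k * (a - b), h1, ?_, h3, hx, h5, hB, h7, ?_⟩, ?_, ?_⟩
  · rw [← h2]; ring
  · have hne : B - k * (2 * A) ≠ 0 := by
      rw [hB]
      exact mul_ne_zero (neg_ne_zero.mpr (sig_ne h1)) (hI _ _ hx)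
    exact lt_of_le_of_ne (by linarith) hne.symm
  · linarith
  · nlinarith

theorem step2 {c s A B : ℝ} (hI : Irr c s) (h : PE c s A B) (hAB : B < A) :
    ∃ A', PE c s A' B ∧ A' < B ∧ A' ≤ A / 2 := by
  obtain ⟨σ, a, b, m, n, h1, h2, h3, h4, h5, h6, h7, h8⟩ := h
  obtain ⟨k, hk, hk1, hk2⟩ := floor_ex B A (by linarith) hAB
  have hkr : (1 : ℝ) ≤ k := by exact_mod_cast hk
  have hx : 0 < ((a + k * (m + n) : ℤ) : ℝ) * c + ((b + k * (m - n) : ℤ) : ℝ) * s := by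
    have := mul_pos (show (0 : ℝ) < k by linarith) h4
    push_cast at this ⊢
    nlinarith
  have hB : A - k * B = σ * (((a + k * (m + n) : ℤ) : ℝ) * s - ((b + k * (m - n) : ℤ) : ℝ) * c) := by
    rw [h5, h6]; push_cast; ring
  refine ⟨A - k * B, ⟨σ, a + k * (m + n), b + k * (m - n), m, n, h1, ?_, hx, h4, hB, h6, ?_, h8⟩, ?_, ?_⟩
  · rw [← h2]; ring
  · have hne : A - k * B ≠ 0 := by
      rw [hB]
      exact mul_ne_zero (sig_ne h1) (hI _ _ hx)
    exact lt_of_le_of_ne (by linarith) hne.symm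
  · linarith
  · nlinarith

theorem step3 {c s A B : ℝ} (h : PE c s A B) (h1' : A < B) (h2' : B < 2 * A) :
    PE c s (B - A) (2 * A - B) := by
  obtain ⟨σ, a, b, m, n, h1, h2, h3, h4, h5, h6, h7, h8⟩ := h
  refine ⟨-σ, a + (m + n), b + (m - n), m + (a + b), n + (a - b), ?_, ?_, ?_, ?_, ?_, ?_, ?_, ?_⟩
  · rw [← h1]; ring
  · rw [← h2]; ring
  · push_cast at h4 ⊢; nlinarith
  · push_cast at h4 ⊢; nlinarith
  · rw [h5, h6]; push_cast; ring
  · rw [h5, h6]; push_cast; ring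
  · linarith
  · linarith

theorem PE.pos {c s A B : ℝ} (h : PE c s A B) : 0 < A ∧ 0 < B := by
  obtain ⟨σ, a, b, m, n, h1, h2, h3, h4, h5, h6, h7, h8⟩ := h
  exact ⟨h7, h8⟩

theorem PE.ne {c s A B : ℝ} (hI : Irr c s) (h : PE c s A B) : A ≠ B ∧ B ≠ 2 * A := by
  obtain ⟨σ, a, b, m, n, h1, h2, h3, h4, h5, h6, h7, h8⟩ := h
  constructor
  · intro h
    apply hI (a + (m + n)) (b + (m - n)) (by push_cast at h4 ⊢; nlinarith)
    apply mul_left_cancel₀ (sig_ne h1)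
    rw [h5, h6] at h; push_cast at h ⊢; linarith
  · intro h
    apply hI (2 * a + (m + n)) (2 * b + (m - n)) (by push_cast at h4 ⊢; nlinarith)
    apply mul_left_cancel₀ (sig_ne h1)
    rw [h5, h6] at h; push_cast at h ⊢; linarith

theorem step {c s A B : ℝ} (hI : Irr c s) (h : PE c s A B) :
    ∃ A' B', PE c s A' B' ∧ A' * B' ≤ A * B / 2 := by
  obtain ⟨hA, hB⟩ := h.pos
  obtain ⟨n1, n2⟩ := h.ne hI
  rcases lt_or_gt_of_ne n1 with h1 | h1
  · rcases lt_or_gt_of_ne n2 with h2 | h2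
    · exact ⟨_, _, step3 h h1 h2, by nlinarith [sq_nonneg (2 * (B - A) - A), mul_pos hA (sub_pos.2 h1)]⟩
    · obtain ⟨B', hP, _, hle⟩ := step1 hI h h2
      exact ⟨_, _, hP, by nlinarith⟩
  · obtain ⟨B', hP, _, hle⟩ := step2 hI h h1
    exact ⟨_, _, hP, by nlinarith⟩

theorem small {c s A B : ℝ} (hI : Irr c s) (h : PE c s A B) (η : ℝ) (hη : 0 < η) :
    ∃ A' B', PE c s A' B' ∧ A' < η ∧ B' < 2 * η := by
  have key : ∀ n : ℕ, ∃ A' B', PE c s A' B' ∧ A' * B' ≤ A * B * (1 / 2) ^ n := by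
    intro n
    induction n with
    | zero => exact ⟨A, B, h, by simp⟩
    | succ k ih =>
      obtain ⟨A', B', h1, h2⟩ := ih
      obtain ⟨A'', B'', h3, h4⟩ := step hI h1
      exact ⟨A'', B'', h3, by rw [pow_succ]; linarith⟩
  obtain ⟨hA, hB⟩ := h.pos
  obtain ⟨n, hn⟩ := exists_pow_lt_of_lt_one (show 0 < η ^ 2 / (A * B) by positivity)
    (show (1 / 2 : ℝ) < 1 by norm_num)
  rw [lt_div_iff₀ (by positivity)] at hn
  obtain ⟨a, b, hP, hle⟩ := key n
  have hlt : a * b < η ^ 2 := by linarith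
  obtain ⟨ha, hb⟩ := hP.pos
  obtain ⟨n1, n2⟩ := hP.ne hI
  rcases lt_or_gt_of_ne n1 with h1 | h1
  · have ha' : a < η := by nlinarith
    rcases lt_or_gt_of_ne n2 with h2 | h2
    · exact ⟨_, _, hP, ha', by linarith⟩
    · obtain ⟨b', hP', hl, _⟩ := step1 hI hP h2
      exact ⟨_, _, hP', ha', by linarith⟩
  · have hb' : b < η := by nlinarith
    obtain ⟨a', hP', hl, _⟩ := step2 hI hP h1
    exact ⟨_, _, hP', by linarith, by linarith⟩

/-- Among the four values of a crossed quadrilateral one is small. -/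
theorem form_lemma (A B C : ℝ) (hd : B ^ 2 - 4 * A * C = 1)
    (hsig : ¬ (0 < A ∧ 0 < C ∧ 0 < A + B + C ∧ 0 < A - B + C))
    (hsig' : ¬ (A < 0 ∧ C < 0 ∧ A + B + C < 0 ∧ A - B + C < 0)) :
    8 * A ^ 2 ≤ 1 ∨ 8 * C ^ 2 ≤ 1 ∨ 2 * (A + B + C) ^ 2 ≤ 1 ∨ 2 * (A - B + C) ^ 2 ≤ 1 := by
  obtain ⟨k, hk, hk2⟩ : ∃ k : ℝ, 0 < k ∧ 8 * k ^ 2 = 1 :=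
    ⟨√(1 / 8), by positivity, by rw [Real.sq_sqrt (by norm_num)]; norm_num⟩
  by_contra hcon
  push Not at hcon
  obtain ⟨c1, c2, c3, c4⟩ := hcon
  have gen : ∀ z : ℝ, k ^ 2 < z ^ 2 → k < z ∨ z < -k := by
    intro z hz
    have := sq_lt_sq.1 hz
    rw [abs_of_pos hk, lt_abs] at this
    rcases this with h | h
    · left; exact h
    · right; linarith
  have gen2 : ∀ z : ℝ, (2 * k) ^ 2 < z ^ 2 → 2 * k < z ∨ z < -(2 * k) := by
    intro z hz
    have := sq_lt_sq.1 hz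
    rw [abs_of_pos (by linarith), lt_abs] at this
    rcases this with h | h
    · left; exact h
    · right; linarith
  -- reduce to one sided statement
  have main1 : ∀ A B C : ℝ, B ^ 2 - 4 * A * C = 1 → k < A → k < C → 2 * k < A + B + C →
      A - B + C < -(2 * k) → False := by
    intro A B C hd hA hC h1 h2
    have : (A + C + 2 * k) ^ 2 < B ^ 2 := by nlinarith
    nlinarith [sq_nonneg (A - C)]
  have main2 : ∀ A B C : ℝ, B ^ 2 - 4 * A * C = 1 → k < A → C < -k → 2 * k < A + B + C →
      2 * k < A - B + C → False := by
    intro A B C hd hA hC h1 h2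
    nlinarith [sq_nonneg B, mul_pos (sub_pos.2 hA) hk]
  have main3 : ∀ A B C : ℝ, B ^ 2 - 4 * A * C = 1 → k < A → C < -k → 2 * k < A + B + C →
      A - B + C < -(2 * k) → False := by
    intro A B C hd hA hC h1 h2
    have : 2 * k < B := by linarith
    nlinarith
  rcases gen A (by linarith) with a | a <;> rcases gen C (by linarith) with b | b <;>
  rcases gen2 (A + B + C) (by linarith) with d | d <;>
  rcases gen2 (A - B + C) (by linarith) with e | e
  · exact hsig ⟨by linarith, by linarith, by linarith, by linarith⟩
  · exact main1 A B C hd a b d e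
  · exact main1 A (-B) C (by linarith) a b (by linarith) (by linarith)
  · linarith
  · exact main2 A B C hd a b d e
  · exact main3 A B C hd a b d e
  · exact main3 A (-B) C (by linarith) a b (by linarith) (by linarith)
  · exact main2 (-C) (-B) (-A) (by linarith) (by linarith) (by linarith) (by linarith) (by linarith)
  · exact main2 C B A (by linarith) b a (by linarith) (by linarith)
  · exact main3 C B A (by linarith) b a (by linarith) (by linarith)
  · exact main3 C (-B) A (by linarith) b a (by linarith) (by linarith)
  · exact main2 (-A) (-B) (-C) (by linarith) (by linarith) (by linarith) (by linarith) (by linarith)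
  · linarith
  · exact main1 (-A) B (-C) (by linarith) (by linarith) (by linarith) (by linarith) (by linarith)
  · exact main1 (-A) (-B) (-C) (by linarith) (by linarith) (by linarith) (by linarith) (by linarith)
  · exact hsig' ⟨by linarith, by linarith, by linarith, by linarith⟩

theorem quad {x y x' y' : ℝ} (hx : 0 < x) (hx' : 0 < x') (hy : y * y' < 0)
    (hd : (x * y' - x' * y) ^ 2 = 1) :
    8 * (x * y) ^ 2 ≤ 1 ∨ 8 * ((x + x') * (y + y')) ^ 2 ≤ 1 ∨
    2 * ((x' + 2 * x) * (y' + 2 * y)) ^ 2 ≤ 1 ∨ 2 * (x' * y') ^ 2 ≤ 1 := by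
  have := form_lemma (x * y) (x * (y + y') + (x + x') * y) ((x + x') * (y + y'))
    (by rw [← hd]; ring) ?_ ?_
  · convert this using 7 <;> ring
  · rintro ⟨h1, h2, h3, h4⟩
    have e1 : 0 < y := pos_of_mul_pos_right h1 hx.le
    have : 0 < x' * y' := by linarith
    have e2 : 0 < y' := pos_of_mul_pos_right this hx'.le
    nlinarith
  · rintro ⟨h1, h2, h3, h4⟩
    have e1 : y < 0 := by by_contra h; push Not at h; nlinarith
    have : x' * y' < 0 := by linarith
    have e2 : y' < 0 := by by_contra h; push Not at h; nlinarith
    nlinarith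

/-- Either type of vector found, with small `y`. -/
theorem good {c s A B : ℝ} (hcs : c ^ 2 + s ^ 2 = 1) (h : PE c s A B) (η : ℝ)
    (hA : A < η) (hB : B < 2 * η) :
    (∃ a b : ℤ, 0 < (a : ℝ) * c + b * s ∧ |(a : ℝ) * s - b * c| < 4 * η ∧
      8 * (((a : ℝ) * c + b * s) * ((a : ℝ) * s - b * c)) ^ 2 ≤ 1) ∨
    (∃ m n : ℤ, 0 < ((m + n : ℤ) : ℝ) * c + ((m - n : ℤ) : ℝ) * s ∧
      |((m + n : ℤ) : ℝ) * s - ((m - n : ℤ) : ℝ) * c| < 4 * η ∧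
      2 * ((((m + n : ℤ) : ℝ) * c + ((m - n : ℤ) : ℝ) * s) *
        (((m + n : ℤ) : ℝ) * s - ((m - n : ℤ) : ℝ) * c)) ^ 2 ≤ 1) := by
  obtain ⟨σ, a, b, m, n, h1, h2, h3, h4, h5, h6, h7, h8⟩ := h
  have hσ : (σ : ℝ) ^ 2 = 1 := by exact_mod_cast h1
  have h2r : ((a : ℝ) * (m - n) - b * (m + n)) ^ 2 = 1 := by exact_mod_cast h2
  have habs : |(σ : ℝ)| = 1 := by
    rcases (by simpa using hσ : (σ : ℝ) = 1 ∨ (σ : ℝ) = -1) with h | h <;> rw [h] <;> simp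
  have key := quad h3 h4 (y := (a : ℝ) * s - b * c)
    (y' := ((m + n : ℤ) : ℝ) * s - ((m - n : ℤ) : ℝ) * c) ?_ ?_
  · have ya : |(a : ℝ) * s - b * c| = A := by
      rw [← abs_of_pos h7, h5, abs_mul, habs, one_mul]
    have yb : |((m + n : ℤ) : ℝ) * s - ((m - n : ℤ) : ℝ) * c| = B := by
      rw [← abs_of_pos h8, h6, abs_mul, abs_neg, habs, one_mul]
    rcases key with k | k | k | k
    · left; exact ⟨a, b, h3, by linarith, k⟩
    · left
      refine ⟨a + (m + n), b + (m - n), ?_, ?_, ?_⟩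
      · push_cast at h4 ⊢; linarith
      · rw [show ((a + (m + n) : ℤ) : ℝ) * s - ((b + (m - n) : ℤ) : ℝ) * c
          = ((a : ℝ) * s - b * c) + (((m + n : ℤ) : ℝ) * s - ((m - n : ℤ) : ℝ) * c) by push_cast; ring]
        refine (abs_add_le _ _).trans_lt ?_
        rw [ya, yb]; linarith
      · convert k using 3; push_cast; ring
    · right
      refine ⟨m + (a + b), n + (a - b), ?_, ?_, ?_⟩
      · push_cast at h4 ⊢; linarith
      · rw [show ((m + (a + b) + (n + (a - b)) : ℤ) : ℝ) * s - ((m + (a + b) - (n + (a - b)) : ℤ) : ℝ) * c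
          = 2 * ((a : ℝ) * s - b * c) + (((m + n : ℤ) : ℝ) * s - ((m - n : ℤ) : ℝ) * c) by push_cast; ring]
        refine (abs_add_le _ _).trans_lt ?_
        rw [abs_mul, ya, yb, abs_of_pos (by norm_num : (0 : ℝ) < 2)]; linarith
      · convert k using 3; push_cast; ring
    · right; exact ⟨m, n, h4, by linarith, k⟩
  · have := mul_pos h7 h8
    rw [h5, h6] at this
    have e : (σ : ℝ) * (↑a * s - ↑b * c) * (-↑σ * (((m + n : ℤ) : ℝ) * s - ((m - n : ℤ) : ℝ) * c))
      = -((σ : ℝ) ^ 2 * ((↑a * s - ↑b * c) * (((m + n : ℤ) : ℝ) * s - ((m - n : ℤ) : ℝ) * c))) := by ring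
    rw [e, hσ] at this; linarith
  · rw [← h2r]; push_cast
    have : (c ^ 2 + s ^ 2) ^ 2 = 1 := by rw [hcs]; norm_num
    calc _ = (c ^ 2 + s ^ 2) ^ 2 * ((a : ℝ) * (m - n) - b * (m + n)) ^ 2 := by ring
      _ = _ := by rw [this, one_mul]

theorem init_ex {c s : ℝ} (hI : Irr c s) (hcs : c ^ 2 + s ^ 2 = 1) : ∃ A B, PE c s A B := by
  have nz : ∀ q p : ℤ, (q : ℝ) * c + p * s ≠ 0 → (q : ℝ) * s - p * c ≠ 0 := by
    intro q p h h'
    rcases lt_or_gt_of_ne h with h1 | h1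
    · apply hI (-q) (-p) (by push_cast; linarith)
      push_cast; linarith
    · exact hI q p h1 h'
  have hc : c ≠ 0 := by
    intro h
    refine nz 0 1 ?_ (by simp [h])
    intro h'
    have : s = 0 := by simpa [h] using h'
    rw [h, this] at hcs; norm_num at hcs
  have hs : s ≠ 0 := by
    intro h
    refine nz 1 0 ?_ (by simp [h])
    intro h'
    apply hc; simpa [h] using h'
  have h1 : c - s ≠ 0 := by
    intro h
    refine nz 1 1 ?_ (by push_cast; linarith)
    intro h'
    apply hc; push_cast at h'; linarith
  have h2 : c + s ≠ 0 := by
    intro h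
    refine nz 1 (-1) ?_ (by push_cast; linarith)
    intro h'
    apply hc; push_cast at h'; linarith
  have mk : ∀ σ a b m n : ℤ, σ ^ 2 = 1 → (a * (m - n) - b * (m + n)) ^ 2 = 1 →
      0 < (a : ℝ) * c + b * s → 0 < ((m + n : ℤ) : ℝ) * c + ((m - n : ℤ) : ℝ) * s →
      0 < σ * ((a : ℝ) * s - b * c) →
      0 < -σ * (((m + n : ℤ) : ℝ) * s - ((m - n : ℤ) : ℝ) * c) → ∃ A B, PE c s A B :=
    fun σ a b m n h1 h2 h3 h4 h5 h6 => ⟨_, _, σ, a, b, m, n, h1, h2, h3, h4, rfl, rfl, h5, h6⟩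
  rcases lt_or_gt_of_ne hc with hc | hc <;> rcases lt_or_gt_of_ne hs with hs | hs
  · rcases lt_or_gt_of_ne h1 with h | h
    · exact mk (1) (-1) (0) (-1) (0) (by norm_num) (by norm_num) (by push_cast; linarith) (by push_cast; linarith) (by push_cast; linarith) (by push_cast; linarith)
    · exact mk (-1) (0) (-1) (-1) (0) (by norm_num) (by norm_num) (by push_cast; linarith) (by push_cast; linarith) (by push_cast; linarith) (by push_cast; linarith)
  · rcases lt_or_gt_of_ne h2 with h | h
    · exact mk (-1) (-1) (0) (0) (-1) (by norm_num) (by norm_num) (by push_cast; linarith) (by push_cast; linarith) (by push_cast; linarith) (by push_cast; linarith)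
    · exact mk (1) (0) (1) (0) (-1) (by norm_num) (by norm_num) (by push_cast; linarith) (by push_cast; linarith) (by push_cast; linarith) (by push_cast; linarith)
  · rcases lt_or_gt_of_ne h2 with h | h
    · exact mk (1) (0) (-1) (0) (1) (by norm_num) (by norm_num) (by push_cast; linarith) (by push_cast; linarith) (by push_cast; linarith) (by push_cast; linarith)
    · exact mk (-1) (1) (0) (0) (1) (by norm_num) (by norm_num) (by push_cast; linarith) (by push_cast; linarith) (by push_cast; linarith) (by push_cast; linarith)
  · rcases lt_or_gt_of_ne h1 with h | h
    · exact mk (-1) (0) (1) (1) (0) (by norm_num) (by norm_num) (by push_cast; linarith) (by push_cast; linarith) (by push_cast; linarith) (by push_cast; linarith)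
    · exact mk (1) (1) (0) (1) (0) (by norm_num) (by norm_num) (by push_cast; linarith) (by push_cast; linarith) (by push_cast; linarith) (by push_cast; linarith)

set_option maxHeartbeats 800000 in
/-- From the half angle vector to the circle point. -/
theorem finish {c s : ℝ} (hcs : c ^ 2 + s ^ 2 = 1) {q p δ N : ℝ} (hδ : 0 < δ)
    (hN : N * δ = q ^ 2 + p ^ 2) (hN0 : 0 < N)
    {ε θ : ℝ} (hε : 0 < ε) (hθ : 0 < θ)
    (hy : |q * s - p * c| < θ / 2) (hθε : θ ^ 2 ≤ ε / 4) (hNN : 1 ≤ q ^ 2 + p ^ 2) (hθ1 : θ ≤ 1) 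
    (hδ1 : 1 ≤ δ)
    (hxy : 8 * ((q * c + p * s) * (q * s - p * c)) ^ 2 ≤ δ ^ 2) :
    √((c ^ 2 - s ^ 2 - ((q ^ 2 - p ^ 2) / δ) / N) ^ 2 + (2 * c * s - (2 * q * p / δ) / N) ^ 2)
        < (1 + ε) / (√2 * N) ∧
    √((c ^ 2 - s ^ 2 - ((q ^ 2 - p ^ 2) / δ) / N) ^ 2 + (2 * c * s - (2 * q * p / δ) / N) ^ 2) < θ := by
  have e1 : ∀ z : ℝ, z / δ / N = z / (q ^ 2 + p ^ 2) := by
    intro z; rw [div_div, ← hN, mul_comm]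
  set M := q ^ 2 + p ^ 2 with hM
  have hM0 : 0 < M := by linarith
  rw [e1, e1]
  set y := q * s - p * c with hyd
  have hMx : (q * c + p * s) ^ 2 + y ^ 2 = M := by
    calc _ = (c ^ 2 + s ^ 2) * M := by rw [hyd, hM]; ring
      _ = M := by rw [hcs, one_mul]
  have hD : (c ^ 2 - s ^ 2 - (q ^ 2 - p ^ 2) / M) ^ 2 + (2 * c * s - 2 * q * p / M) ^ 2
      = 4 * y ^ 2 / M := by
    have t1 : (c ^ 2 - s ^ 2 - (q ^ 2 - p ^ 2) / M) ^ 2 + (2 * c * s - 2 * q * p / M) ^ 2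
      = (c ^ 2 + s ^ 2) ^ 2 + M ^ 2 / M ^ 2 -
        2 * ((c ^ 2 - s ^ 2) * (q ^ 2 - p ^ 2) + 4 * c * s * q * p) / M := by
      rw [show M ^ 2 = (q ^ 2 - p ^ 2) ^ 2 + (2 * q * p) ^ 2 by rw [hM]; ring]
      have : ((q ^ 2 - p ^ 2) ^ 2 + (2 * q * p) ^ 2) / ((q ^ 2 - p ^ 2) ^ 2 + (2 * q * p) ^ 2)
        = ((q ^ 2 - p ^ 2) / M) ^ 2 + (2 * q * p / M) ^ 2 := by
        rw [div_pow, div_pow, ← add_div]; congr 1; rw [hM]; ring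
      rw [this]; ring
    have t2 : (c ^ 2 - s ^ 2) * (q ^ 2 - p ^ 2) + 4 * c * s * q * p
        = (q * c + p * s) ^ 2 - y ^ 2 := by rw [hyd]; ring
    rw [t1, t2, hcs, div_self (by positivity), show (q * c + p * s) ^ 2 = M - y ^ 2 by linarith]
    field_simp; ring
  rw [hD]
  have hy2 : y ^ 2 < θ ^ 2 / 4 := by
    have := sq_lt_sq' (by linarith [abs_nonneg y]) hy
    rw [sq_abs] at this; linarith
  constructor
  · rw [Real.sqrt_lt' (by positivity), div_pow, mul_pow, Real.sq_sqrt (by norm_num)]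
    rw [div_lt_div_iff₀ hM0 (by positivity)]
    -- 4 y² * 2 N² < (1+ε)² M
    have hyM : 8 * (y ^ 2 * M) < δ ^ 2 * (1 + ε) ^ 2 := by
      rw [← hMx]
      have hy1 : y ^ 2 ≤ 1 := by nlinarith
      have hy4 : y ^ 2 * y ^ 2 ≤ ε / 16 := by nlinarith [sq_nonneg y]
      have hδ2 : 1 ≤ δ ^ 2 := by nlinarith
      have hδε : ε ≤ δ ^ 2 * ε := by nlinarith
      have hδε2 : 0 ≤ δ ^ 2 * ε ^ 2 := by positivity
      have q1 : 8 * (y ^ 2 * ((q * c + p * s) ^ 2 + y ^ 2)) =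
        8 * ((q * c + p * s) * y) ^ 2 + 8 * (y ^ 2 * y ^ 2) := by ring
      have q2 : δ ^ 2 * (1 + ε) ^ 2 = δ ^ 2 + 2 * (δ ^ 2 * ε) + δ ^ 2 * ε ^ 2 := by ring
      rw [q1, q2]
      linarith
    have : δ ^ 2 * (4 * y ^ 2 * (2 * N ^ 2)) < δ ^ 2 * ((1 + ε) ^ 2 * M) := by
      calc _ = 8 * (y ^ 2 * M) * M := by rw [← hN]; ring
        _ < δ ^ 2 * (1 + ε) ^ 2 * M := mul_lt_mul_of_pos_right hyM hM0
        _ = _ := by ring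
    exact lt_of_mul_lt_mul_left this (by positivity)
  · rw [Real.sqrt_lt' hθ, div_lt_iff₀ hM0]
    nlinarith

theorem stmt_0 (α₁ α₂ : ℝ) (hsphere : α₁ ^ 2 + α₂ ^ 2 = 1)
    (hirr : ¬ (∃ r₁ r₂ : ℚ, α₁ = (r₁ : ℝ) ∧ α₂ = (r₂ : ℝ))) (ε : ℝ) (hε : 0 < ε) :
    {p : ℤ × ℤ × ℤ | 1 ≤ p.1 ∧ p.2.1 ^ 2 + p.2.2 ^ 2 = p.1 ^ 2 ∧
      Real.sqrt ((α₁ - (p.2.1 : ℝ) / (p.1 : ℝ)) ^ 2 + (α₂ - (p.2.2 : ℝ) / (p.1 : ℝ)) ^ 2)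
        < (1 + ε) / (Real.sqrt 2 * (p.1 : ℝ))}.Infinite := by
  obtain ⟨c, s, hcs, rfl, rfl⟩ : ∃ c s : ℝ, c ^ 2 + s ^ 2 = 1 ∧ α₁ = c ^ 2 - s ^ 2 ∧ α₂ = 2 * c * s := by
    obtain ⟨w, hw⟩ := IsSquare.sq (1 : ℂ) |>.elim fun _ _ =>
      IsAlgClosed.exists_pow_nat_eq (⟨α₁, α₂⟩ : ℂ) (n := 2) (by norm_num)
    have h1 := congrArg Complex.re hw
    have h2 := congrArg Complex.im hw
    simp only [sq, Complex.mul_re, Complex.mul_im] at h1 h2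
    refine ⟨w.re, w.im, ?_, by rw [← h1]; ring, by rw [← h2]; ring⟩
    have h3 : (w.re ^ 2 + w.im ^ 2) ^ 2 = 1 := by rw [← hsphere, ← h1, ← h2]; ring
    nlinarith [sq_nonneg w.re, sq_nonneg w.im]
  have hI : Irr c s := by
    intro q p hx hy
    apply hirr
    have hM : ((q : ℝ) ^ 2 + p ^ 2) ≠ 0 := by
      intro h0
      have hq : (q : ℝ) = 0 := by nlinarith [sq_nonneg (q : ℝ), sq_nonneg (p : ℝ)]
      have hp : (p : ℝ) = 0 := by nlinarith [sq_nonneg (q : ℝ), sq_nonneg (p : ℝ)]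
      rw [hq, hp] at hx; simp at hx
    refine ⟨(q ^ 2 - p ^ 2) / (q ^ 2 + p ^ 2), 2 * q * p / (q ^ 2 + p ^ 2), ?_, ?_⟩
    · push_cast
      rw [eq_div_iff hM]
      have e : (q : ℝ) * s = p * c := by linarith
      have e2 : (q : ℝ) ^ 2 * s ^ 2 = p ^ 2 * c ^ 2 := by rw [← mul_pow, ← mul_pow, e]
      linear_combination ((q : ℝ) ^ 2 - p ^ 2) * hcs - 2 * e2
    · push_cast
      rw [eq_div_iff hM]
      linear_combination (2 * q * p : ℝ) * hcs + 2 * (q * c - p * s) * hy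
  obtain ⟨A₀, B₀, h0⟩ := init_ex hI hcs
  intro hfin
  set S := {p : ℤ × ℤ × ℤ | 1 ≤ p.1 ∧ p.2.1 ^ 2 + p.2.2 ^ 2 = p.1 ^ 2 ∧
      √((c ^ 2 - s ^ 2 - (p.2.1 : ℝ) / (p.1 : ℝ)) ^ 2 + (2 * c * s - (p.2.2 : ℝ) / (p.1 : ℝ)) ^ 2)
        < (1 + ε) / (√2 * (p.1 : ℝ))} with hS
  let d : ℤ × ℤ × ℤ → ℝ := fun p =>
    √((c ^ 2 - s ^ 2 - (p.2.1 : ℝ) / (p.1 : ℝ)) ^ 2 + (2 * c * s - (p.2.2 : ℝ) / (p.1 : ℝ)) ^ 2)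
  have hdpos : ∀ p, 0 < d p := by
    intro p
    apply Real.sqrt_pos.2
    by_contra hle
    apply hirr
    refine ⟨p.2.1 / p.1, p.2.2 / p.1, ?_, ?_⟩ <;> push_cast
    · nlinarith [sq_nonneg (c ^ 2 - s ^ 2 - (p.2.1 : ℝ) / (p.1 : ℝ)), sq_nonneg (2 * c * s - (p.2.2 : ℝ) / (p.1 : ℝ))]
    · nlinarith [sq_nonneg (c ^ 2 - s ^ 2 - (p.2.1 : ℝ) / (p.1 : ℝ)), sq_nonneg (2 * c * s - (p.2.2 : ℝ) / (p.1 : ℝ))]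
  have hmin : ∃ θ₀ : ℝ, 0 < θ₀ ∧ ∀ p ∈ S, θ₀ ≤ d p := by
    rcases S.eq_empty_or_nonempty with he | hne
    · exact ⟨1, one_pos, by simp [he]⟩
    · obtain ⟨p, hp, hm⟩ := Set.exists_min_image S d hfin hne
      exact ⟨d p, hdpos p, hm⟩
  obtain ⟨θ₀, hθ₀, hmin⟩ := hmin
  obtain ⟨θ, hθ, hθ1, hθ2, hθ3⟩ : ∃ θ : ℝ, 0 < θ ∧ θ ≤ 1 ∧ θ ^ 2 ≤ ε / 4 ∧ θ ≤ θ₀ := by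
    refine ⟨min (min 1 (ε / 4)) θ₀, by positivity, ?_, ?_, min_le_right _ _⟩
    · exact (min_le_left _ _).trans (min_le_left _ _)
    · have h1 : min (min 1 (ε / 4)) θ₀ ≤ 1 := (min_le_left _ _).trans (min_le_left _ _)
      have h2 : min (min 1 (ε / 4)) θ₀ ≤ ε / 4 := (min_le_left _ _).trans (min_le_right _ _)
      have h3 : 0 < min (min 1 (ε / 4)) θ₀ := by positivity
      nlinarith
  obtain ⟨A, B, hP, hA, hB⟩ := small hI h0 (θ / 8) (by positivity)
  have ge1 : ∀ q p : ℤ, 0 < (q : ℝ) * c + p * s → 1 ≤ q ^ 2 + p ^ 2 := by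
    intro q p hx
    by_contra hlt
    have h0 : q ^ 2 + p ^ 2 = 0 := by nlinarith [sq_nonneg q, sq_nonneg p]
    have hq : q = 0 := by nlinarith [sq_nonneg q, sq_nonneg p]
    have hp : p = 0 := by nlinarith [sq_nonneg q, sq_nonneg p]
    rw [hq, hp] at hx; simp at hx
  rcases good hcs hP _ hA hB with ⟨q, p, hx, hy, hxy⟩ | ⟨m, n, hx, hy, hxy⟩
  · have h1 := ge1 q p hx
    have h1r : (1 : ℝ) ≤ (q : ℝ) ^ 2 + p ^ 2 := by exact_mod_cast h1
    obtain ⟨f1, f2⟩ := finish hcs (q := q) (p := p) (δ := 1) (N := (q : ℝ) ^ 2 + p ^ 2) one_pos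
      (by ring) (by linarith) hε hθ (by linarith) hθ2 h1r hθ1 le_rfl (by linarith)
    have hmem : (q ^ 2 + p ^ 2, q ^ 2 - p ^ 2, 2 * q * p) ∈ S := by
      refine ⟨h1, by ring, ?_⟩
      simpa using f1
    have := hmin _ hmem
    have f3 : d (q ^ 2 + p ^ 2, q ^ 2 - p ^ 2, 2 * q * p) < θ := by simpa [d] using f2
    linarith
  · have h1 := ge1 _ _ hx
    have h1r : (1 : ℝ) ≤ ((m + n : ℤ) : ℝ) ^ 2 + ((m - n : ℤ) : ℝ) ^ 2 := by exact_mod_cast h1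
    have h1' : 1 ≤ m ^ 2 + n ^ 2 := by
      have : (m + n) ^ 2 + (m - n) ^ 2 = 2 * (m ^ 2 + n ^ 2) := by ring
      omega
    have h1r' : (1 : ℝ) ≤ (m : ℝ) ^ 2 + n ^ 2 := by exact_mod_cast h1'
    obtain ⟨f1, f2⟩ := finish hcs (q := ((m + n : ℤ) : ℝ)) (p := ((m - n : ℤ) : ℝ)) (δ := 2)
      (N := (m : ℝ) ^ 2 + n ^ 2) two_pos
      (by push_cast; ring) (by linarith) hε hθ (by linarith) hθ2 h1r hθ1 (by norm_num) (by linarith)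
    have e1 : (((m + n : ℤ) : ℝ) ^ 2 - ((m - n : ℤ) : ℝ) ^ 2) / 2 = ((2 * m * n : ℤ) : ℝ) := by
      push_cast; ring
    have e2 : 2 * ((m + n : ℤ) : ℝ) * ((m - n : ℤ) : ℝ) / 2 = ((m ^ 2 - n ^ 2 : ℤ) : ℝ) := by
      push_cast; ring
    have e3 : (m : ℝ) ^ 2 + n ^ 2 = ((m ^ 2 + n ^ 2 : ℤ) : ℝ) := by push_cast; ring
    rw [e1, e2, e3] at f1 f2
    have hmem : (m ^ 2 + n ^ 2, 2 * m * n, m ^ 2 - n ^ 2) ∈ S := ⟨h1', by ring, f1⟩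
    have := hmin _ hmem
    have f3 : d (m ^ 2 + n ^ 2, 2 * m * n, m ^ 2 - n ^ 2) < θ := f2
    linarith
end

section
/- There exists a point (α₁, α₂) ∈ ℝ² on the unit circle (α₁² + α₂² = 1) with (α₁, α₂) ∉ ℚ², such that for every ε > 0 there are only finitely many triples (Q, A₁, A₂) of integers with Q ≥ 1, A₁² + A₂² = Q², and √((α₁ − A₁/Q)² + (α₂ − A₂/Q)²) < (1 − ε)/(√2 · Q). In other words, the constant √2 in the approximation bound (1+ε)/(√2·Q) for rational points on the circle cannot be replaced by any larger number. -/
theorem stmt_1 :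
    ∃ α₁ α₂ : ℝ, α₁ ^ 2 + α₂ ^ 2 = 1 ∧
      ¬ (∃ r₁ r₂ : ℚ, α₁ = (r₁ : ℝ) ∧ α₂ = (r₂ : ℝ)) ∧
      ∀ ε : ℝ, 0 < ε →
        {p : ℤ × ℤ × ℤ | 1 ≤ p.1 ∧ p.2.1 ^ 2 + p.2.2 ^ 2 = p.1 ^ 2 ∧
          Real.sqrt ((α₁ - (p.2.1 : ℝ) / (p.1 : ℝ)) ^ 2 + (α₂ - (p.2.2 : ℝ) / (p.1 : ℝ)) ^ 2)
            < (1 - ε) / (Real.sqrt 2 * (p.1 : ℝ))}.Finite := by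
  have hs : Real.sqrt 2 ^ 2 = 2 := Real.sq_sqrt (by norm_num)
  have hs0 : 0 < Real.sqrt 2 := by positivity
  refine ⟨Real.sqrt 2 / 2, Real.sqrt 2 / 2, by linarith, ?_, ?_⟩
  · rintro ⟨r, _, h, _⟩
    apply irrational_sqrt_two
    exact ⟨r * 2, by push_cast; linarith⟩
  · intro ε hε
    convert Set.finite_empty
    rw [Set.eq_empty_iff_forall_notMem]
    rintro ⟨Q, A, B⟩ ⟨hQ, hAB, h⟩
    simp only at hQ hAB h
    have hne : A ≠ B := by
      rintro rfl
      have hQR : (0 : ℝ) < Q := by exact_mod_cast (by omega : 0 < Q)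
      have hR : (A : ℝ) ^ 2 + (A : ℝ) ^ 2 = (Q : ℝ) ^ 2 := by exact_mod_cast hAB
      have hA : (A : ℝ) ≠ 0 := by
        intro h0
        rw [h0] at hR
        nlinarith
      have h1 : Real.sqrt 2 = |(Q : ℝ) / A| := by
        rw [← Real.sqrt_sq_eq_abs]
        congr 1
        field_simp
        linarith
      apply irrational_sqrt_two
      exact ⟨|(Q : ℚ) / A|, by rw [h1]; push_cast; rfl⟩
    have hD : 1 ≤ (A - B) ^ 2 := by
      have : 0 < (A - B) ^ 2 := by
        have := sub_ne_zero.mpr hne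
        positivity
      omega
    have hDR : (1 : ℝ) ≤ ((A : ℝ) - B) ^ 2 := by exact_mod_cast hD
    have hQR : (0 : ℝ) < Q := by exact_mod_cast (by omega : 0 < Q)
    have hR : (A : ℝ) ^ 2 + (B : ℝ) ^ 2 = (Q : ℝ) ^ 2 := by exact_mod_cast hAB
    have key : 1 / (Real.sqrt 2 * Q) ≤
        Real.sqrt ((Real.sqrt 2 / 2 - (A : ℝ) / Q) ^ 2 + (Real.sqrt 2 / 2 - (B : ℝ) / Q) ^ 2) := by
      apply Real.le_sqrt_of_sq_le
      have e1 : (1 / (Real.sqrt 2 * Q)) ^ 2 = (1 / 2) / (Q : ℝ) ^ 2 := by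
        rw [div_pow, mul_pow, hs]; field_simp
      have e2 : (Real.sqrt 2 / 2 - (A : ℝ) / Q) ^ 2 + (Real.sqrt 2 / 2 - (B : ℝ) / Q) ^ 2
          = ((Real.sqrt 2 * Q / 2 - A) ^ 2 + (Real.sqrt 2 * Q / 2 - B) ^ 2) / (Q : ℝ) ^ 2 := by
        field_simp
      rw [e1, e2]
      gcongr
      have e3 : (Real.sqrt 2 * Q) ^ 2 = 2 * (Q : ℝ) ^ 2 := by rw [mul_pow, hs]
      nlinarith [sq_nonneg (Real.sqrt 2 * Q - (A + B))]
    have : (1 - ε) / (Real.sqrt 2 * Q) ≤ 1 / (Real.sqrt 2 * Q) := by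
      gcongr
      linarith
    linarith
end

section
/- Let β₁, β₂ ∈ ℝ and T ≥ 1. Then there exist integers q, b₁, b₂ with: (i) 1 ≤ q ≤ T; (ii) (qβ₁ − b₁)² + (qβ₂ − b₂)² < 4q/T; (iii) q divides b₁² + b₂². -/
open MeasureTheory in
theorem mink_aux (β₁ β₂ R δ : ℝ) (hR : 0 < R) (hδ : 0 < δ) (h : 1 < R ^ 2 * δ ^ 2) :
    ∃ s t u v : ℤ, ¬ (s = 0 ∧ t = 0 ∧ u = 0 ∧ v = 0) ∧ |(s : ℝ)| < R ∧ |(t : ℝ)| < R ∧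
      |s * β₁ - t * β₂ - u| < δ ∧ |s * β₂ + t * β₁ - v| < δ := by
  let A : Matrix (Fin 4) (Fin 4) ℝ :=
    !![1,0,0,0; 0,1,0,0; β₁,-β₂,-1,0; β₂,β₁,0,-1]
  have hA : A.det = 1 := by
    simp [A, Matrix.det_succ_row_zero, Fin.sum_univ_succ, Fin.succAbove]
  let f := Matrix.toLin' A
  have hf : LinearMap.det f = 1 := by simp [f, hA]
  let w : Fin 4 → ℝ := ![R, R, δ, δ]
  let B : Set (Fin 4 → ℝ) := Set.pi Set.univ fun i => Set.Ioo (-(w i)) (w i)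
  have hvol : volume (f ⁻¹' B) = ENNReal.ofReal (16 * (R ^ 2 * δ ^ 2)) := by
    rw [Measure.addHaar_preimage_linearMap _ (by rw [hf]; exact one_ne_zero), hf]
    simp only [B, Real.volume_pi_Ioo]
    rw [← ENNReal.ofReal_prod_of_nonneg]
    · simp only [inv_one, abs_one, ENNReal.ofReal_one, one_mul]
      congr 1
      simp [w, Fin.prod_univ_succ]
      ring
    · intro i _
      fin_cases i <;> simp [w] <;> linarith
  have fund := ZSpan.isAddFundamentalDomain' (Pi.basisFun ℝ (Fin 4)) volume
  have : Countable (Submodule.span ℤ (Set.range (Pi.basisFun ℝ (Fin 4)))).toAddSubgroup :=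
    inferInstanceAs (Countable (Submodule.span ℤ (Set.range (Pi.basisFun ℝ (Fin 4)))))
  have hconv : Convex ℝ (f ⁻¹' B) :=
    (convex_pi fun i _ => convex_Ioo _ _).linear_preimage f
  have hsymm : ∀ x ∈ f ⁻¹' B, -x ∈ f ⁻¹' B := by
    intro x hx
    simp only [Set.mem_preimage, map_neg, B, Set.mem_pi, Set.mem_univ, true_imp_iff, Set.mem_Ioo,
      Pi.neg_apply] at hx ⊢
    intro i
    have := hx i
    constructor <;> linarith [this.1, this.2]
  obtain ⟨⟨x, hx⟩, hx0, hxB⟩ := exists_ne_zero_mem_lattice_of_measure_mul_two_pow_lt_measure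
    fund hsymm hconv (by
      rw [hvol, ZSpan.fundamentalDomain_pi_basisFun, Real.volume_pi_Ico]
      simp only [sub_zero, ENNReal.ofReal_one, Finset.prod_const_one, one_mul,
        Module.finrank_fin_fun]
      rw [show (2 : ENNReal) ^ 4 = ENNReal.ofReal 16 by norm_num]
      exact (ENNReal.ofReal_lt_ofReal_iff (by positivity)).2 (by linarith))
  have hx' := ((Pi.basisFun ℝ (Fin 4)).mem_span_iff_repr_mem ℤ x).1 hx
  choose z hz using hx'
  simp only [Pi.basisFun_repr, algebraMap_int_eq, eq_intCast] at hz
  have hb : ∀ i, |f x i| < w i := fun i => abs_lt.2 (hxB i trivial)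
  have h0 := hb 0
  have h1 := hb 1
  have h2 := hb 2
  have h3 := hb 3
  simp [f, w, A, Matrix.mulVec, dotProduct, Fin.sum_univ_succ] at h0 h1 h2 h3
  have e0 := hz 0
  have e1 := hz 1
  have e2 := hz 2
  have e3 := hz 3
  refine ⟨z 0, z 1, z 2, z 3, ?_, ?_, ?_, ?_, ?_⟩
  · rintro ⟨a, b, c, d⟩
    apply hx0
    ext i
    fin_cases i
    · simpa [a] using e0.symm
    · simpa [b] using e1.symm
    · simpa [c] using e2.symm
    · simpa [d] using e3.symm
  · rw [e0]; exact h0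
  · rw [e1]; exact h1
  · rw [e0, e1, e2]; convert h2 using 2; ring
  · rw [e0, e1, e3]; convert h3 using 2; ring

theorem stmt_2 (β₁ β₂ : ℝ) (T : ℝ) (hT : 1 ≤ T) :
    ∃ q b₁ b₂ : ℤ, 1 ≤ q ∧ (q : ℝ) ≤ T ∧
      ((q : ℝ) * β₁ - (b₁ : ℝ)) ^ 2 + ((q : ℝ) * β₂ - (b₂ : ℝ)) ^ 2 < 4 * (q : ℝ) / T ∧
      q ∣ b₁ ^ 2 + b₂ ^ 2 := by
  have hT0 : 0 < T := by linarith
  rcases lt_or_ge T 2 with h2 | h2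
  · refine ⟨1, round β₁, round β₂, le_rfl, by simpa using hT, ?_, one_dvd _⟩
    have a := sq_le_sq' (abs_le.1 (abs_sub_round β₁)).1 (abs_le.1 (abs_sub_round β₁)).2
    have b := sq_le_sq' (abs_le.1 (abs_sub_round β₂)).1 (abs_le.1 (abs_sub_round β₂)).2
    rw [lt_div_iff₀ hT0]
    push_cast
    nlinarith
  · set r := Real.sqrt (T / 2) with hr
    have hr2 : r ^ 2 = T / 2 := Real.sq_sqrt (by positivity)
    have hr1 : 1 ≤ r := Real.one_le_sqrt.2 (by linarith)
    have hr0 : 0 < r := by linarith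
    have hfl := Nat.lt_floor_add_one r
    have hfl' := Nat.floor_le hr0.le
    set N := ⌊r⌋₊
    obtain ⟨s, t, u, v, hne, hs, ht, hu, hv⟩ := mink_aux β₁ β₂ (N + 1) r⁻¹ (by positivity)
      (by positivity) (by
        rw [← mul_pow, ← div_eq_mul_inv]
        have : 1 < ((N : ℝ) + 1) / r := by rw [lt_div_iff₀ hr0]; linarith
        nlinarith)
    have key : ∀ a : ℤ, |(a : ℝ)| < N + 1 → (a : ℝ) ^ 2 ≤ T / 2 := by
      intro a ha
      have : |a| < (N : ℤ) + 1 := by exact_mod_cast ha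
      have : |a| ≤ (N : ℤ) := by omega
      have h' : |(a : ℝ)| ≤ N := by exact_mod_cast this
      rw [← hr2, ← sq_abs]
      exact pow_le_pow_left₀ (abs_nonneg _) (h'.trans hfl') 2
    have key2 : ∀ a : ℝ, |a| < r⁻¹ → a ^ 2 < 2 / T := by
      intro a ha
      have e : (2 / T) = (r⁻¹) ^ 2 := by rw [inv_pow, hr2, inv_div]
      rw [e, ← sq_abs]
      exact pow_lt_pow_left₀ ha (abs_nonneg _) two_ne_zero
    have hri : r⁻¹ ≤ 1 := inv_le_one_of_one_le₀ hr1
    have hst : 0 < s ^ 2 + t ^ 2 := by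
      by_contra hcon
      have hs0 : s = 0 := by nlinarith [sq_nonneg s, sq_nonneg t]
      have ht0 : t = 0 := by nlinarith [sq_nonneg s, sq_nonneg t]
      subst hs0 ht0
      simp only [Int.cast_zero, zero_mul, sub_zero, zero_sub, add_zero, abs_neg] at hu hv
      have hu' : |(u : ℝ)| < 1 := by linarith
      have hv' : |(v : ℝ)| < 1 := by linarith
      have hu'' : |u| < 1 := by exact_mod_cast hu'
      have hv'' : |v| < 1 := by exact_mod_cast hv'
      exact hne ⟨rfl, rfl, Int.abs_lt_one_iff.1 hu'', Int.abs_lt_one_iff.1 hv''⟩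
    have hst' : (0 : ℝ) < (s : ℝ) ^ 2 + (t : ℝ) ^ 2 := by exact_mod_cast hst
    refine ⟨s ^ 2 + t ^ 2, u * s + v * t, v * s - u * t, hst, ?_, ?_, ⟨u ^ 2 + v ^ 2, by ring⟩⟩
    · push_cast
      linarith [key s hs, key t ht]
    · push_cast
      have h1 := key2 _ hu
      have h2 := key2 _ hv
      calc _ = ((s : ℝ) ^ 2 + (t : ℝ) ^ 2) *
            ((s * β₁ - t * β₂ - u) ^ 2 + (s * β₂ + t * β₁ - v) ^ 2) := by ring
        _ < ((s : ℝ) ^ 2 + (t : ℝ) ^ 2) * (2 / T + 2 / T) :=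
            mul_lt_mul_of_pos_left (by linarith) hst'
        _ = _ := by ring
end

section
/- Let γ > √(3/π) and let β₁, β₂ ∈ ℝ with at least one of β₁, β₂ irrational. Then there exist infinitely many triples (q, b₁, b₂) of integers with q ≥ 1, q dividing b₁² + b₂², and (qβ₁ − b₁)² + (qβ₂ − b₂)² < γ². -/
open Complex in
/-- The Hermitian form. -/
noncomputable def hF (β : ℂ) (t : ℝ) (x y : GaussianInt) : ℝ :=
  t * normSq (y : ℂ) + normSq ((y : ℂ) * β - x) / t

lemma one_le_normSq_gi (x : GaussianInt) (hx : x ≠ 0) : 1 ≤ Complex.normSq (x : ℂ) := by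
  rw [GaussianInt.toComplex_def, Complex.normSq_apply]
  have h : 0 < x.norm := GaussianInt.norm_pos.2 hx
  rw [Zsqrtd.norm_def] at h
  have : (1 : ℤ) ≤ x.re * x.re + x.im * x.im := by linarith
  have h2 : (1 : ℝ) ≤ x.re * x.re + x.im * x.im := by exact_mod_cast this
  simpa using h2

lemma exists_round (z : ℂ) : ∃ k : GaussianInt, Complex.normSq (z - k) ≤ 1 / 2 := by
  refine ⟨⟨round z.re, round z.im⟩, ?_⟩
  rw [GaussianInt.toComplex_def, Complex.normSq_apply]
  have h1 := abs_le.1 (abs_sub_round z.re)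
  have h2 := abs_le.1 (abs_sub_round z.im)
  simp
  nlinarith [h1.1, h1.2, h2.1, h2.2]

lemma hF_lower (β : ℂ) (t : ℝ) (ht : 0 < t) (x y : GaussianInt) (h : IsCoprime x y) :
    min t (1 / t) ≤ hF β t x y := by
  unfold hF
  by_cases hy : y = 0
  · subst hy
    have hx : x ≠ 0 := by
      rintro rfl
      exact not_isCoprime_zero_zero h
    have := one_le_normSq_gi x hx
    refine (min_le_right _ _).trans ?_
    simp only [map_zero, mul_zero, zero_mul, zero_sub, zero_add, Complex.normSq_neg]
    gcongr
  · have := one_le_normSq_gi y hy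
    refine (min_le_left _ _).trans ?_
    have h2 : 0 ≤ Complex.normSq ((y : ℂ) * β - x) / t :=
      div_nonneg (Complex.normSq_nonneg _) ht.le
    nlinarith

lemma gram (t : ℝ) (ht : t ≠ 0) (y L y' L' : ℂ) :
    (t * Complex.normSq y + Complex.normSq L / t) * (t * Complex.normSq y' + Complex.normSq L' / t)
    = Complex.normSq (t * y' * (starRingEnd ℂ) y + L' * (starRingEnd ℂ) L / t)
      + Complex.normSq (y * L' - y' * L) := by
  have : (t * y' * (starRingEnd ℂ) y + L' * (starRingEnd ℂ) L / t)
    = (t * y' * (starRingEnd ℂ) y + L' * (starRingEnd ℂ) L * ((t⁻¹ : ℝ) : ℂ)) := by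
    push_cast; rfl
  rw [this]
  simp only [Complex.normSq_apply, Complex.add_re, Complex.add_im, Complex.mul_re, Complex.mul_im,
    Complex.conj_re, Complex.conj_im, Complex.ofReal_re, Complex.ofReal_im, Complex.sub_re,
    Complex.sub_im]
  field_simp
  ring

lemma exists_small (β : ℂ) (t : ℝ) (ht : 0 < t) :
    ∃ x y : GaussianInt, IsCoprime x y ∧ hF β t x y ^ 2 ≤ 3 := by
  set P : Set ℝ := {r | ∃ x y : GaussianInt, IsCoprime x y ∧ hF β t x y = r} with hP
  have hne : P.Nonempty := ⟨_, 1, 0, isCoprime_one_left, rfl⟩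
  have hlow : ∀ r ∈ P, min t (1 / t) ≤ r := by
    rintro r ⟨x, y, h, rfl⟩
    exact hF_lower β t ht x y h
  have hbdd : BddBelow P := ⟨_, hlow⟩
  have hm : 0 < sInf P := lt_of_lt_of_le (by positivity) (le_csInf hne hlow)
  obtain ⟨r, ⟨x, y, hxy, rfl⟩, hr⟩ := exists_lt_of_csInf_lt hne (show sInf P < 6 / 5 * sInf P by linarith)
  refine ⟨x, y, hxy, ?_⟩
  obtain ⟨a, b, hab⟩ := id hxy
  have hpos : 0 < hF β t x y := hm.trans_le (csInf_le hbdd ⟨x, y, hxy, rfl⟩)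
  set F := hF β t x y with hFdef
  set L : ℂ := (y : ℂ) * β - x with hL
  set H : ℂ := t * (a : ℂ) * (starRingEnd ℂ) (y : ℂ) + ((a : ℂ) * β + b) * (starRingEnd ℂ) L / t with hH
  obtain ⟨k, hk⟩ := exists_round (H / F)
  have hF0 : (F : ℂ) ≠ 0 := by exact_mod_cast hpos.ne'
  have ht0 : (t : ℂ) ≠ 0 := by exact_mod_cast ht.ne'
  have hcop : IsCoprime (-b - k * x) (a - k * y) :=
    ⟨-y, x, by linear_combination hab⟩
  have hw : sInf P ≤ hF β t (-b - k * x) (a - k * y) := csInf_le hbdd ⟨_, _, hcop, rfl⟩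
  have hg := gram t ht.ne' (y : ℂ) L ((a - k * y : GaussianInt) : ℂ)
    (((a - k * y : GaussianInt) : ℂ) * β - ((-b - k * x : GaussianInt) : ℂ))
  have habC : (a : ℂ) * x + b * y = 1 := by
    have := congrArg GaussianInt.toComplex hab
    simpa using this
  have hFC : (F : ℂ) = t * ((y : ℂ) * (starRingEnd ℂ) (y : ℂ)) + L * (starRingEnd ℂ) L / t := by
    rw [Complex.mul_conj, Complex.mul_conj, hFdef, hF]
    push_cast
    rfl
  have e1 : (t * ((a - k * y : GaussianInt) : ℂ) * (starRingEnd ℂ) (y : ℂ) +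
      (((a - k * y : GaussianInt) : ℂ) * β - ((-b - k * x : GaussianInt) : ℂ)) *
        (starRingEnd ℂ) L / t) = F * (H / F - k) := by
    rw [mul_sub, mul_div_cancel₀ _ hF0, hFC, hH]
    simp only [map_sub, map_mul, map_neg]
    have : (y : ℂ) * β = L + x := by rw [hL]; ring
    field_simp
    linear_combination (-(k : ℂ) * (starRingEnd ℂ) L) * this
  have e2 : (y : ℂ) * (((a - k * y : GaussianInt) : ℂ) * β - ((-b - k * x : GaussianInt) : ℂ))
      - ((a - k * y : GaussianInt) : ℂ) * L = 1 := by
    simp only [map_sub, map_mul, map_neg, hL]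
    linear_combination habC
  rw [e1, e2, map_mul, Complex.normSq_ofReal, map_one] at hg
  have hg' : F * hF β t (-b - k * x) (a - k * y) = F * F * Complex.normSq (H / F - k) + 1 := hg
  nlinarith [mul_le_mul_of_nonneg_left hk (mul_pos hpos hpos).le,
    mul_le_mul_of_nonneg_left hw hpos.le, mul_le_mul_of_nonneg_left hr.le hpos.le]

theorem stmt_3 (γ : ℝ) (hγ : Real.sqrt (3 / Real.pi) < γ) (β₁ β₂ : ℝ)
    (hirr : ¬ (∃ r₁ r₂ : ℚ, β₁ = (r₁ : ℝ) ∧ β₂ = (r₂ : ℝ))) :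
    {p : ℤ × ℤ × ℤ | 1 ≤ p.1 ∧ p.1 ∣ p.2.1 ^ 2 + p.2.2 ^ 2 ∧
      ((p.1 : ℝ) * β₁ - (p.2.1 : ℝ)) ^ 2 + ((p.1 : ℝ) * β₂ - (p.2.2 : ℝ)) ^ 2 < γ ^ 2}.Infinite := by
  intro hfin
  have hγ2 : 3 / 4 < γ ^ 2 := by
    have h1 : 3 / Real.pi < γ ^ 2 := Real.lt_sq_of_sqrt_lt hγ
    have h2 : 3 / 4 < 3 / Real.pi :=
      div_lt_div_of_pos_left (by norm_num) Real.pi_pos Real.pi_lt_four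
    linarith
  have hev : ∀ᶠ t : ℝ in nhdsWithin 0 (Set.Ioi 0), ∀ p ∈ {p : ℤ × ℤ × ℤ | 1 ≤ p.1 ∧ p.1 ∣ p.2.1 ^ 2 + p.2.2 ^ 2 ∧
      ((p.1 : ℝ) * β₁ - (p.2.1 : ℝ)) ^ 2 + ((p.1 : ℝ) * β₂ - (p.2.2 : ℝ)) ^ 2 < γ ^ 2},
      t < (((p.1 : ℝ) * β₁ - (p.2.1 : ℝ)) ^ 2 + ((p.1 : ℝ) * β₂ - (p.2.2 : ℝ)) ^ 2) / (2 * p.1) := by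
    rw [Filter.eventually_all_finite hfin]
    rintro ⟨q, b₁, b₂⟩ ⟨hq, -, -⟩
    dsimp only at hq ⊢
    have hq' : (0 : ℝ) < q := by exact_mod_cast hq
    refine Filter.Eventually.filter_mono nhdsWithin_le_nhds (eventually_lt_nhds ?_)
    refine div_pos ?_ (by positivity)
    by_contra hcon
    have h1 : (q : ℝ) * β₁ - b₁ = 0 := by
      nlinarith [sq_nonneg ((q : ℝ) * β₁ - b₁), sq_nonneg ((q : ℝ) * β₂ - b₂)]
    have h2 : (q : ℝ) * β₂ - b₂ = 0 := by
      nlinarith [sq_nonneg ((q : ℝ) * β₁ - b₁), sq_nonneg ((q : ℝ) * β₂ - b₂)]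
    apply hirr
    refine ⟨b₁ / q, b₂ / q, ?_, ?_⟩
    · push_cast; rw [eq_div_iff hq'.ne']; linarith
    · push_cast; rw [eq_div_iff hq'.ne']; linarith
  have hev2 : ∀ᶠ t : ℝ in nhdsWithin 0 (Set.Ioi 0), t < 1 / 2 :=
    Filter.Eventually.filter_mono nhdsWithin_le_nhds (eventually_lt_nhds (by norm_num))
  obtain ⟨t, ⟨htS, ht2⟩, ht⟩ := ((hev.and hev2).and self_mem_nhdsWithin).exists
  have ht : 0 < t := ht
  obtain ⟨x, y, hxy, hF3⟩ := exists_small ⟨β₁, β₂⟩ t ht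
  set N := Complex.normSq (y : ℂ) with hN
  set M := Complex.normSq ((y : ℂ) * ⟨β₁, β₂⟩ - x) with hM
  have hN0 : 0 ≤ N := Complex.normSq_nonneg _
  have hM0 : 0 ≤ M := Complex.normSq_nonneg _
  have hFe : hF ⟨β₁, β₂⟩ t x y = t * N + M / t := rfl
  rw [hFe] at hF3
  have hMt : M / t * t = M := div_mul_cancel₀ _ ht.ne'
  set K := M / t with hK
  have hK0 : 0 ≤ K := div_nonneg hM0 ht.le
  have htN : 0 ≤ t * N := by positivity
  have hK2 : K < 2 := by nlinarith
  have hMN : N * M ≤ 3 / 4 := by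
    rw [← hMt]
    nlinarith [sq_nonneg (t * N - K)]
  have hy : y ≠ 0 := by
    rintro rfl
    have hx : x ≠ 0 := by
      rintro rfl
      exact not_isCoprime_zero_zero hxy
    have h1 := one_le_normSq_gi x hx
    have : M = Complex.normSq (x : ℂ) := by
      rw [hM]; simp
    nlinarith
  have hNe : N = ((y.re ^ 2 + y.im ^ 2 : ℤ) : ℝ) := by
    rw [hN, GaussianInt.toComplex_def, Complex.normSq_apply]
    simp; ring
  have hN1 : 1 ≤ N := one_le_normSq_gi y hy
  have key : (((y.re ^ 2 + y.im ^ 2 : ℤ) : ℝ) * β₁ - ((x.re * y.re + x.im * y.im : ℤ) : ℝ)) ^ 2 +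
     (((y.re ^ 2 + y.im ^ 2 : ℤ) : ℝ) * β₂ - ((x.im * y.re - x.re * y.im : ℤ) : ℝ)) ^ 2 = N * M := by
    rw [hNe, hM, GaussianInt.toComplex_def, GaussianInt.toComplex_def, Complex.normSq_apply]
    simp
    ring
  have := htS (y.re ^ 2 + y.im ^ 2, x.re * y.re + x.im * y.im, x.im * y.re - x.re * y.im) ⟨?_, ?_, ?_⟩
  · dsimp only at this
    rw [key, ← hNe, lt_div_iff₀ (by linarith)] at this
    nlinarith
  · dsimp only
    rw [hNe] at hN1
    exact_mod_cast hN1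
  · exact ⟨x.re ^ 2 + x.im ^ 2, by ring⟩
  · dsimp only
    rw [key]
    linarith
end

section
/- For every ε > 0 there exists T₀ ≥ 1 such that for every T ≥ T₀ and every point (α₁, α₂, α₃) ∈ ℝ³ on the unit sphere (α₁² + α₂² + α₃² = 1), there exist integers Q, A₁, A₂, A₃ with 1 ≤ Q ≤ T, A₁² + A₂² + A₃² = Q², and √((α₁ − A₁/Q)² + (α₂ − A₂/Q)² + (α₃ − A₃/Q)²) < (4 + ε)/√(Q·T). -/
open MeasureTheory in
lemma mink4 (M : Matrix (Fin 4) (Fin 4) ℝ) (hM : M.det = 1) (r : Fin 4 → ℝ)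
    (hr : ∀ i, 0 < r i) (hp : 1 < ∏ i, r i) :
    ∃ n : Fin 4 → ℤ, n ≠ 0 ∧ ∀ i, |(M.mulVec (fun j => (n j : ℝ))) i| ≤ r i := by
  classical
  set B : Set (Fin 4 → ℝ) := Set.pi Set.univ (fun i => Set.Icc (-r i) (r i)) with hB
  set f := Matrix.toLin' M with hf
  have hdet : LinearMap.det f = 1 := by rw [hf, LinearMap.det_toLin', hM]
  set b := Pi.basisFun ℝ (Fin 4) with hb
  have fund := ZSpan.isAddFundamentalDomain' b (volume : Measure (Fin 4 → ℝ))
  have hF : volume (ZSpan.fundamentalDomain b) = 1 := by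
    rw [hb, ZSpan.fundamentalDomain_pi_basisFun, volume_pi, Measure.pi_pi]
    simp
  have hvol : volume (f ⁻¹' B) = ENNReal.ofReal (∏ i, (2 * r i)) := by
    rw [Measure.addHaar_preimage_linearMap _ (by rw [hdet]; exact one_ne_zero), hdet, hB,
      volume_pi, Measure.pi_pi]
    simp only [Real.volume_Icc]
    rw [ENNReal.ofReal_prod_of_nonneg (fun i _ => by have := hr i; positivity)]
    simp [two_mul]
  have : Countable (Submodule.span ℤ (Set.range b)).toAddSubgroup :=
    inferInstanceAs (Countable (Submodule.span ℤ (Set.range b)))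
  obtain ⟨x, hx0, hx⟩ := exists_ne_zero_mem_lattice_of_measure_mul_two_pow_lt_measure
    (s := f ⁻¹' B) fund
    (by
      intro x hx
      simp only [hB, Set.mem_preimage, Set.mem_pi, Set.mem_univ, true_imp_iff, Set.mem_Icc,
        map_neg, Pi.neg_apply] at hx ⊢
      intro i
      have := hx i
      constructor <;> linarith)
    ((convex_pi (fun i _ => convex_Icc _ _)).linear_preimage f)
    (by
      rw [hF, hvol]
      simp only [Module.finrank_fin_fun, one_mul]
      rw [show (2 : ENNReal) ^ 4 = ENNReal.ofReal (2 ^ 4) by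
        rw [ENNReal.ofReal_pow (by norm_num)]; simp]
      rw [ENNReal.ofReal_lt_ofReal_iff_of_nonneg (by norm_num)]
      rw [Finset.prod_mul_distrib]
      simp only [Finset.prod_const, Finset.card_univ, Fintype.card_fin]
      linarith)
  have hmem : (x : Fin 4 → ℝ) ∈ Submodule.span ℤ (Set.range b) := x.2
  rw [Module.Basis.mem_span_iff_repr_mem] at hmem
  choose n hn using hmem
  have hn' : (fun j => (n j : ℝ)) = (x : Fin 4 → ℝ) := by
    funext j
    simpa [hb] using hn j
  refine ⟨n, ?_, ?_⟩
  · rintro rfl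
    apply hx0
    ext j
    rw [← hn']
    simp
  · intro i
    rw [hn']
    rw [abs_le]
    exact hx i (Set.mem_univ i)

lemma spinor (p q s : ℝ) (h : p ^ 2 + q ^ 2 + s ^ 2 = 1) :
    ∃ a c d : ℝ, a ^ 2 + c ^ 2 + d ^ 2 = 1 ∧ p = 2 * a * c ∧ q = - 2 * a * d ∧
      s = a ^ 2 - c ^ 2 - d ^ 2 := by
  by_cases hs : s = -1
  · have hp : p = 0 := by subst hs; nlinarith [sq_nonneg p, sq_nonneg q]
    have hq : q = 0 := by subst hs; nlinarith [sq_nonneg p, sq_nonneg q]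
    exact ⟨0, 1, 0, by norm_num, by simp [hp], by simp [hq], by simp [hs]⟩
  · have hs1 : 0 < 1 + s := by
      have : -1 ≤ s := by nlinarith [sq_nonneg p, sq_nonneg q]
      rcases this.lt_or_eq with h | h
      · linarith
      · exact absurd h.symm hs
    have ha : 0 < Real.sqrt ((1 + s) / 2) := Real.sqrt_pos.2 (by linarith)
    have ha2 : Real.sqrt ((1 + s) / 2) ^ 2 = (1 + s) / 2 := Real.sq_sqrt (by linarith)
    set a := Real.sqrt ((1 + s) / 2)
    have hcd : (p / (2 * a)) ^ 2 + (- q / (2 * a)) ^ 2 = (1 - s) / 2 := by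
      rw [div_pow, div_pow, mul_pow, ha2]
      field_simp
      nlinarith
    refine ⟨a, p / (2 * a), - q / (2 * a), by linarith, by field_simp, by field_simp, by linarith⟩

theorem stmt_4 (ε : ℝ) (hε : 0 < ε) :
    ∃ T₀ : ℝ, 1 ≤ T₀ ∧ ∀ T : ℝ, T₀ ≤ T →
      ∀ α₁ α₂ α₃ : ℝ, α₁ ^ 2 + α₂ ^ 2 + α₃ ^ 2 = 1 →
        ∃ Q A₁ A₂ A₃ : ℤ, 1 ≤ Q ∧ (Q : ℝ) ≤ T ∧
          A₁ ^ 2 + A₂ ^ 2 + A₃ ^ 2 = Q ^ 2 ∧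
          Real.sqrt ((α₁ - (A₁ : ℝ) / (Q : ℝ)) ^ 2 + (α₂ - (A₂ : ℝ) / (Q : ℝ)) ^ 2 +
              (α₃ - (A₃ : ℝ) / (Q : ℝ)) ^ 2)
            < (4 + ε) / Real.sqrt ((Q : ℝ) * T) := by
  obtain ⟨k, hk⟩ : ∃ k : ℝ, k = 2 + ε / 4 := ⟨_, rfl⟩
  have hk0 : 0 < k := by rw [hk]; linarith
  refine ⟨1 + k ^ 4 / ε, by linarith [show 0 < k ^ 4 / ε by positivity], ?_⟩
  intro T hT α₁ α₂ α₃ hα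
  have hT1 : 1 ≤ T := by linarith [show 0 < k ^ 4 / ε by positivity]
  have hT0 : 0 < T := by linarith
  have hkT : k ^ 4 < ε * T := by
    have : k ^ 4 / ε < T := by linarith
    rw [div_lt_iff₀ hε] at this
    linarith
  obtain ⟨δ, hδ⟩ : ∃ δ : ℝ, δ = k ^ 2 / T := ⟨_, rfl⟩
  have hδ0 : 0 < δ := by rw [hδ]; positivity
  have hδT : δ * T = k ^ 2 := by rw [hδ]; field_simp
  have hδ2 : δ ^ 2 < ε := by
    have h1 : δ ^ 2 * T ^ 2 = k ^ 4 := by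
      rw [← mul_pow, hδT]; ring
    have h2 : δ ^ 2 * T ^ 2 < ε * T ^ 2 := by
      rw [h1]; nlinarith [mul_pos hε hT0]
    exact lt_of_mul_lt_mul_right h2 (by positivity)
  have hmain : 4 < (T - δ) * δ := by
    have : (T - δ) * δ = k ^ 2 - δ ^ 2 := by rw [← hδT]; ring
    rw [this, hk]; nlinarith
  have hTδ : 0 < T - δ := by
    by_contra hcon
    push Not at hcon
    nlinarith
  obtain ⟨a, c, d, hu, h1, h2, h3⟩ := spinor _ _ _ hα
  have hR : 0 < Real.sqrt ((T - δ) / 2) := Real.sqrt_pos.2 (by linarith)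
  have hR2 : Real.sqrt ((T - δ) / 2) ^ 2 = (T - δ) / 2 := Real.sq_sqrt (by linarith)
  have hD : 0 < Real.sqrt (δ / 2) := Real.sqrt_pos.2 (by linarith)
  have hD2 : Real.sqrt (δ / 2) ^ 2 = δ / 2 := Real.sq_sqrt (by linarith)
  set R := Real.sqrt ((T - δ) / 2)
  set D := Real.sqrt (δ / 2)
  obtain ⟨n, hn0, hn⟩ := mink4 !![a, 0, c, d; 0, a, -d, c; -c, d, a, 0; -d, -c, 0, a]
    (by
      have : (a ^ 2 + c ^ 2 + d ^ 2) ^ 2 = 1 := by rw [hu]; norm_num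
      rw [← this]
      simp [Matrix.det_succ_row_zero, Fin.sum_univ_succ, Fin.succAbove]
      ring)
    ![R, R, D, D]
    (by intro i; fin_cases i <;> simp [hR, hD])
    (by
      simp only [Fin.prod_univ_four, Matrix.cons_val]
      have : R * R * D * D = R ^ 2 * D ^ 2 := by ring
      rw [this, hR2, hD2]; linarith)
  have e0 := hn 0
  have e1 := hn 1
  have e2 := hn 2
  have e3 := hn 3
  simp [Matrix.mulVec, dotProduct, Fin.sum_univ_four] at e0 e1 e2 e3
  obtain ⟨x, hx⟩ : ∃ x, x = n 0 := ⟨_, rfl⟩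
  obtain ⟨y, hy⟩ : ∃ x, x = n 1 := ⟨_, rfl⟩
  obtain ⟨z, hz⟩ : ∃ x, x = n 2 := ⟨_, rfl⟩
  obtain ⟨w, hw⟩ : ∃ x, x = n 3 := ⟨_, rfl⟩
  rw [← hx, ← hz, ← hw] at e0
  rw [← hy, ← hz, ← hw] at e1
  rw [← hx, ← hy, ← hz] at e2
  rw [← hx, ← hy, ← hw] at e3
  replace e0 := sq_le_sq' (abs_le.1 e0).1 (abs_le.1 e0).2
  replace e1 := sq_le_sq' (abs_le.1 e1).1 (abs_le.1 e1).2
  replace e2 := sq_le_sq' (abs_le.1 e2).1 (abs_le.1 e2).2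
  replace e3 := sq_le_sq' (abs_le.1 e3).1 (abs_le.1 e3).2
  rw [hR2] at e0 e1
  rw [hD2] at e2 e3
  have hQ1 : 1 ≤ x ^ 2 + y ^ 2 + z ^ 2 + w ^ 2 := by
    by_contra hcon
    have hx2 := sq_nonneg x
    have hy2 := sq_nonneg y
    have hz2 := sq_nonneg z
    have hw2 := sq_nonneg w
    apply hn0
    have q0 : n 0 = 0 := by rw [← hx]; exact pow_eq_zero_iff two_ne_zero |>.1 (by omega)
    have q1 : n 1 = 0 := by rw [← hy]; exact pow_eq_zero_iff two_ne_zero |>.1 (by omega)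
    have q2 : n 2 = 0 := by rw [← hz]; exact pow_eq_zero_iff two_ne_zero |>.1 (by omega)
    have q3 : n 3 = 0 := by rw [← hw]; exact pow_eq_zero_iff two_ne_zero |>.1 (by omega)
    funext i
    fin_cases i
    exacts [q0, q1, q2, q3]
  have hQ1r : (1 : ℝ) ≤ ((x ^ 2 + y ^ 2 + z ^ 2 + w ^ 2 : ℤ) : ℝ) := by exact_mod_cast hQ1
  refine ⟨x ^ 2 + y ^ 2 + z ^ 2 + w ^ 2, 2 * (x * z + y * w), 2 * (y * z - x * w),
    x ^ 2 + y ^ 2 - z ^ 2 - w ^ 2, hQ1, ?_, by ring, ?_⟩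
  · push_cast
    have : (x : ℝ) ^ 2 + y ^ 2 + z ^ 2 + w ^ 2
      = (a ^ 2 + c ^ 2 + d ^ 2) * ((x : ℝ) ^ 2 + y ^ 2 + z ^ 2 + w ^ 2) := by rw [hu]; ring
    rw [this]
    linarith
  · push_cast at hQ1r ⊢
    have hkey : (x : ℝ) ^ 2 + y ^ 2 + z ^ 2 + w ^ 2 - (α₁ * (2 * (x * z + y * w))
        + α₂ * (2 * (y * z - x * w)) + α₃ * (x ^ 2 + y ^ 2 - z ^ 2 - w ^ 2)) ≤ 2 * δ := by
      have : (x : ℝ) ^ 2 + y ^ 2 + z ^ 2 + w ^ 2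
        = (a ^ 2 + c ^ 2 + d ^ 2) * ((x : ℝ) ^ 2 + y ^ 2 + z ^ 2 + w ^ 2) := by rw [hu]; ring
      rw [this, h1, h2, h3]
      linarith
    have hA : (2 * ((x : ℝ) * z + y * w)) ^ 2 + (2 * ((y : ℝ) * z - x * w)) ^ 2
      + ((x : ℝ) ^ 2 + y ^ 2 - z ^ 2 - w ^ 2) ^ 2 = (x ^ 2 + y ^ 2 + z ^ 2 + w ^ 2) ^ 2 := by ring
    generalize (x : ℝ) ^ 2 + y ^ 2 + z ^ 2 + w ^ 2 = Q at *
    generalize 2 * ((x : ℝ) * z + y * w) = A at *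
    generalize 2 * ((y : ℝ) * z - x * w) = B at *
    generalize (x : ℝ) ^ 2 + y ^ 2 - z ^ 2 - w ^ 2 = C at *
    have hQ : 0 < Q := by linarith
    rw [Real.sqrt_lt' (by positivity), div_pow, Real.sq_sqrt (by positivity)]
    have : (α₁ - A / Q) ^ 2 + (α₂ - B / Q) ^ 2 + (α₃ - C / Q) ^ 2
        = 2 * (Q - (α₁ * A + α₂ * B + α₃ * C)) / Q := by
      field_simp
      linear_combination Q ^ 2 * hα + hA
    rw [this, div_lt_div_iff₀ hQ (by positivity)]
    have h4 : 2 * (Q - (α₁ * A + α₂ * B + α₃ * C)) * T ≤ 4 * k ^ 2 := by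
      rw [← hδT]
      have := mul_le_mul_of_nonneg_right hkey hT0.le
      linarith
    have h5 : 4 * k ^ 2 < (4 + ε) ^ 2 := by rw [hk]; nlinarith only [hε, mul_pos hε hε]
    calc _ = (2 * (Q - (α₁ * A + α₂ * B + α₃ * C)) * T) * Q := by ring
      _ < _ := by apply mul_lt_mul_of_pos_right _ hQ; linarith
end

section
/- Let (α₁, α₂, α₃) ∈ ℝ³ be a point on the unit sphere (α₁² + α₂² + α₃² = 1) with (α₁, α₂, α₃) ∉ ℚ³, and let ε > 0. Then there exist infinitely many quadruples (Q, A₁, A₂, A₃) of integers with Q ≥ 1, A₁² + A₂² + A₃² = Q², and √((α₁ − A₁/Q)² + (α₂ − A₂/Q)² + (α₃ − A₃/Q)²) < (2·√(3/π) + ε)/Q. -/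
/-- A binary Hermitian form over the Gaussian integers, in coordinates. -/
def hform (A C B1 B2 : ℝ) (v : ℤ × ℤ × ℤ × ℤ) : ℝ :=
  A * ((v.1 : ℝ) ^ 2 + (v.2.1 : ℝ) ^ 2) + C * ((v.2.2.1 : ℝ) ^ 2 + (v.2.2.2 : ℝ) ^ 2)
    + 2 * (B1 * ((v.1 : ℝ) * v.2.2.1 + v.2.1 * v.2.2.2)
      + B2 * ((v.2.1 : ℝ) * v.2.2.1 - v.1 * v.2.2.2))

lemma hform_lower (A C B1 B2 D : ℝ) (hD : A * C - (B1 ^ 2 + B2 ^ 2) = D)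
    (v : ℤ × ℤ × ℤ × ℤ) :
    D * ((v.2.2.1 : ℝ) ^ 2 + (v.2.2.2 : ℝ) ^ 2) ≤ A * hform A C B1 B2 v ∧
    D * ((v.1 : ℝ) ^ 2 + (v.2.1 : ℝ) ^ 2) ≤ C * hform A C B1 B2 v := by
  obtain ⟨a, b, c, d⟩ := v
  simp only [hform]
  subst hD
  constructor
  · nlinarith [sq_nonneg (A * (a : ℝ) + B1 * c - B2 * d), sq_nonneg (A * (b : ℝ) + B1 * d + B2 * c)]
  · nlinarith [sq_nonneg (C * (c : ℝ) + B1 * a + B2 * b), sq_nonneg (C * (d : ℝ) + B1 * b - B2 * a)]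

lemma int_mem_Icc_of_sq (a : ℤ) (M : ℝ) (h : (a : ℝ) ^ 2 ≤ M) : a ∈ Set.Icc (-⌈M⌉) ⌈M⌉ := by
  have h1 : ((a ^ 2 : ℤ) : ℝ) ≤ (⌈M⌉ : ℤ) := by
    push_cast
    exact h.trans (Int.le_ceil M)
  have h2 : a ^ 2 ≤ ⌈M⌉ := by exact_mod_cast h1
  constructor <;> nlinarith [sq_nonneg (a - 1), sq_nonneg (a + 1), sq_nonneg a, Int.le_self_sq a, Int.le_self_sq (-a)]

lemma hform_min (A C B1 B2 D : ℝ) (hA : 0 < A) (hDpos : 0 < D)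
    (hD : A * C - (B1 ^ 2 + B2 ^ 2) = D) :
    ∃ v : ℤ × ℤ × ℤ × ℤ, v ≠ 0 ∧ ∀ w : ℤ × ℤ × ℤ × ℤ, w ≠ 0 →
      hform A C B1 B2 v ≤ hform A C B1 B2 w := by
  have hC : 0 < C := by
    have : 0 < A * C := by nlinarith [sq_nonneg B1, sq_nonneg B2]
    exact (pos_iff_pos_of_mul_pos this).1 hA
  set S : Set (ℤ × ℤ × ℤ × ℤ) := {v | v ≠ 0 ∧ hform A C B1 B2 v ≤ A} with hS
  have hfin : S.Finite := by
    set M1 := C * A / D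
    set M2 := A * A / D
    refine Set.Finite.subset (((Set.finite_Icc (-⌈M1⌉) ⌈M1⌉).prod
      ((Set.finite_Icc (-⌈M1⌉) ⌈M1⌉).prod ((Set.finite_Icc (-⌈M2⌉) ⌈M2⌉).prod
      (Set.finite_Icc (-⌈M2⌉) ⌈M2⌉))))) ?_
    intro v hv
    obtain ⟨h1, h2⟩ := hform_lower A C B1 B2 D hD v
    have hv2 := hv.2
    have k1 : (v.1 : ℝ) ^ 2 + (v.2.1 : ℝ) ^ 2 ≤ M1 := by
      rw [le_div_iff₀ hDpos]
      nlinarith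
    have k2 : (v.2.2.1 : ℝ) ^ 2 + (v.2.2.2 : ℝ) ^ 2 ≤ M2 := by
      rw [le_div_iff₀ hDpos]
      nlinarith
    refine ⟨int_mem_Icc_of_sq _ _ ?_, int_mem_Icc_of_sq _ _ ?_, int_mem_Icc_of_sq _ _ ?_,
      int_mem_Icc_of_sq _ _ ?_⟩
    · nlinarith [sq_nonneg (v.2.1 : ℝ)]
    · nlinarith [sq_nonneg (v.1 : ℝ)]
    · nlinarith [sq_nonneg (v.2.2.2 : ℝ)]
    · nlinarith [sq_nonneg (v.2.2.1 : ℝ)]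
  have hne : S.Nonempty := ⟨(1, 0, 0, 0), by simp, by simp [hform]⟩
  obtain ⟨v, hv, hmin⟩ := Set.exists_min_image S (hform A C B1 B2) hfin hne
  refine ⟨v, hv.1, fun w hw => ?_⟩
  by_cases h : hform A C B1 B2 w ≤ A
  · exact hmin w ⟨hw, h⟩
  · exact hv.2.trans (not_le.1 h).le

lemma hform_pos (A C B1 B2 D : ℝ) (hA : 0 < A) (hDpos : 0 < D)
    (hD : A * C - (B1 ^ 2 + B2 ^ 2) = D) (v : ℤ × ℤ × ℤ × ℤ) (hv : v ≠ 0) :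
    0 < hform A C B1 B2 v := by
  have hC : 0 < C := by
    have : 0 < A * C := by nlinarith [sq_nonneg B1, sq_nonneg B2]
    exact (pos_iff_pos_of_mul_pos this).1 hA
  obtain ⟨h1, h2⟩ := hform_lower A C B1 B2 D hD v
  by_contra hneg
  push Not at hneg
  have e1 : (v.2.2.1 : ℝ) ^ 2 + (v.2.2.2 : ℝ) ^ 2 ≤ 0 := by
    by_contra hh
    push Not at hh
    nlinarith [mul_pos hDpos hh]
  have e2 : (v.1 : ℝ) ^ 2 + (v.2.1 : ℝ) ^ 2 ≤ 0 := by
    by_contra hh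
    push Not at hh
    nlinarith [mul_pos hDpos hh]
  apply hv
  have z1 : (v.1 : ℝ) ^ 2 = 0 := by nlinarith [sq_nonneg (v.1 : ℝ), sq_nonneg (v.2.1 : ℝ)]
  have z2 : (v.2.1 : ℝ) ^ 2 = 0 := by nlinarith [sq_nonneg (v.1 : ℝ), sq_nonneg (v.2.1 : ℝ)]
  have z3 : (v.2.2.1 : ℝ) ^ 2 = 0 := by
    nlinarith [sq_nonneg (v.2.2.1 : ℝ), sq_nonneg (v.2.2.2 : ℝ)]
  have z4 : (v.2.2.2 : ℝ) ^ 2 = 0 := by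
    nlinarith [sq_nonneg (v.2.2.1 : ℝ), sq_nonneg (v.2.2.2 : ℝ)]
  simp at z1 z2 z3 z4
  ext <;> simp [*]

/-- A minimal vector that is moreover primitive. -/
lemma hform_min_prim (A C B1 B2 D : ℝ) (hA : 0 < A) (hDpos : 0 < D)
    (hD : A * C - (B1 ^ 2 + B2 ^ 2) = D) :
    ∃ a b c d e f g h : ℤ, (a * g - b * h - (c * e - d * f) = 1) ∧
      (a * h + b * g - (c * f + d * e) = 0) ∧ ∀ w : ℤ × ℤ × ℤ × ℤ, w ≠ 0 →
      hform A C B1 B2 (a, b, c, d) ≤ hform A C B1 B2 w := by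
  obtain ⟨⟨a, b, c, d⟩, hv, hmin⟩ := hform_min A C B1 B2 D hA hDpos hD
  let p : GaussianInt := ⟨a, b⟩
  let q : GaussianInt := ⟨c, d⟩
  have hpq : ¬ (p = 0 ∧ q = 0) := by
    rintro ⟨h1, h2⟩
    apply hv
    simp only [Zsqrtd.ext_iff, p, q] at h1 h2
    simp at h1 h2
    simp [h1, h2]
  set γ := EuclideanDomain.gcd p q with hγ
  have hγ0 : γ ≠ 0 := fun h => hpq (EuclideanDomain.gcd_eq_zero_iff.1 h)
  obtain ⟨p', hp'⟩ : γ ∣ p := EuclideanDomain.gcd_dvd_left p q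
  obtain ⟨q', hq'⟩ : γ ∣ q := EuclideanDomain.gcd_dvd_right p q
  have hbez := EuclideanDomain.gcd_eq_gcd_ab p q
  rw [← hγ] at hbez
  set x := EuclideanDomain.gcdA p q
  set y := EuclideanDomain.gcdB p q
  have h1 : p' * x + q' * y = 1 := by
    apply mul_left_cancel₀ hγ0
    rw [mul_one]
    conv_rhs => rw [hbez, hp', hq']
    ring
  have h1r := congrArg Zsqrtd.re h1
  have h1i := congrArg Zsqrtd.im h1
  simp at h1r h1i
  refine ⟨p'.re, p'.im, q'.re, q'.im, -y.re, -y.im, x.re, x.im, by linarith, by linarith, ?_⟩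
  intro w hw
  refine le_trans ?_ (hmin w hw)
  have pr := congrArg Zsqrtd.re hp'
  have pi := congrArg Zsqrtd.im hp'
  have qr := congrArg Zsqrtd.re hq'
  have qi := congrArg Zsqrtd.im hq'
  simp [p, q] at pr pi qr qi
  have hp0 : ((p'.re, p'.im, q'.re, q'.im) : ℤ × ℤ × ℤ × ℤ) ≠ 0 := by
    intro h
    simp at h
    obtain ⟨i1, i2, i3, i4⟩ := h
    simp [i1, i2, i3, i4] at h1r
  have hpos := hform_pos A C B1 B2 D hA hDpos hD _ hp0
  have hg : (1 : ℤ) ≤ γ.re ^ 2 + γ.im ^ 2 := by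
    by_contra hcon
    have r0 : γ.re ^ 2 = 0 := by nlinarith [sq_nonneg γ.re, sq_nonneg γ.im]
    have i0 : γ.im ^ 2 = 0 := by nlinarith [sq_nonneg γ.re, sq_nonneg γ.im]
    apply hγ0
    ext
    · simpa using r0
    · simpa using i0
  have hg' : (1 : ℝ) ≤ (γ.re : ℝ) ^ 2 + (γ.im : ℝ) ^ 2 := by exact_mod_cast hg
  have hmul : hform A C B1 B2 (a, b, c, d) =
      ((γ.re : ℝ) ^ 2 + (γ.im : ℝ) ^ 2) * hform A C B1 B2 (p'.re, p'.im, q'.re, q'.im) := by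
    simp only [hform]
    rw [pr, pi, qr, qi]
    push_cast
    ring
  rw [hmul]
  nlinarith

lemma round_aux (m X : ℝ) (hm : 0 < m) : ∃ k : ℤ, (X - k * m) ^ 2 ≤ m ^ 2 / 4 := by
  refine ⟨round (X / m), ?_⟩
  have h := abs_sub_round (X / m)
  have e : X - round (X / m) * m = (X / m - round (X / m)) * m := by field_simp
  rw [e, mul_pow]
  have : (X / m - round (X / m)) ^ 2 ≤ (1 / 2) ^ 2 := by
    rw [← sq_abs]
    exact pow_le_pow_left₀ (abs_nonneg _) h 2
  nlinarith [sq_nonneg m]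

set_option maxHeartbeats 2000000 in
lemma hform_hermite (A C B1 B2 D : ℝ) (hA : 0 < A) (hDpos : 0 < D)
    (hD : A * C - (B1 ^ 2 + B2 ^ 2) = D) :
    ∃ v : ℤ × ℤ × ℤ × ℤ, v ≠ 0 ∧ 0 < hform A C B1 B2 v ∧ (hform A C B1 B2 v) ^ 2 ≤ 2 * D := by
  obtain ⟨a, b, c, d, e, f, g, h, hr, hi, hmin⟩ := hform_min_prim A C B1 B2 D hA hDpos hD
  have hv : ((a, b, c, d) : ℤ × ℤ × ℤ × ℤ) ≠ 0 := by
    intro h0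
    simp at h0
    obtain ⟨i1, i2, i3, i4⟩ := h0
    simp [i1, i2, i3, i4] at hr
  have hpos := hform_pos A C B1 B2 D hA hDpos hD _ hv
  refine ⟨_, hv, hpos, ?_⟩
  set m := hform A C B1 B2 (a, b, c, d) with hm
  -- `X = conj p (A r + β t) + conj q (conj β r + C t)`
  let U1 : ℝ := A * e + B1 * g - B2 * h
  let U2 : ℝ := A * f + B1 * h + B2 * g
  let V1 : ℝ := C * g + B1 * e + B2 * f
  let V2 : ℝ := C * h + B1 * f - B2 * e
  let X1 : ℝ := a * U1 + b * U2 + c * V1 + d * V2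
  let X2 : ℝ := a * U2 - b * U1 + c * V2 - d * V1
  obtain ⟨k1, hk1⟩ := round_aux m X1 hpos
  obtain ⟨k2, hk2⟩ := round_aux m X2 hpos
  let w : ℤ × ℤ × ℤ × ℤ := (e - (k1 * a - k2 * b), f - (k1 * b + k2 * a),
    g - (k1 * c - k2 * d), h - (k1 * d + k2 * c))
  have hw : w ≠ 0 := by
    intro h0
    simp only [w, Prod.ext_iff] at h0
    simp at h0
    obtain ⟨i1, i2, i3, i4⟩ := h0
    have j1 : e = k1 * a - k2 * b := by linarith
    have j2 : f = k1 * b + k2 * a := by linarith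
    have j3 : g = k1 * c - k2 * d := by linarith
    have j4 : h = k1 * d + k2 * c := by linarith
    rw [j1, j2, j3, j4] at hr
    ring_nf at hr
    simp at hr
  have hle := hmin w hw
  have hr' : (a * g - b * h - (c * e - d * f) : ℝ) = 1 := by exact_mod_cast hr
  have hi' : (a * h + b * g - (c * f + d * e) : ℝ) = 0 := by exact_mod_cast hi
  have key : m * hform A C B1 B2 w = (X1 - k1 * m) ^ 2 + (X2 - k2 * m) ^ 2 +
      D * ((a * g - b * h - (c * e - d * f) : ℝ) ^ 2 + (a * h + b * g - (c * f + d * e)) ^ 2) := by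
    rw [hm, ← hD]
    simp only [hform, w, X1, X2, U1, U2, V1, V2]
    push_cast
    ring
  rw [hr', hi'] at key
  have h5 := mul_le_mul_of_nonneg_left hle hpos.le
  rw [key] at h5
  linarith

lemma approx_one (α₁ α₂ α₃ : ℝ) (hsphere : α₁ ^ 2 + α₂ ^ 2 + α₃ ^ 2 = 1)
    (s : ℝ) (hs : 0 < s) :
    ∃ Q A₁ A₂ A₃ : ℤ, 1 ≤ Q ∧ A₁ ^ 2 + A₂ ^ 2 + A₃ ^ 2 = Q ^ 2 ∧
      (Q : ℝ) - (α₁ * A₁ + α₂ * A₂ + α₃ * A₃) ≤ 3 * s ∧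
      ((Q : ℝ) + (α₁ * A₁ + α₂ * A₂ + α₃ * A₃)) *
        ((Q : ℝ) - (α₁ * A₁ + α₂ * A₂ + α₃ * A₃)) ≤ 2 := by
  obtain ⟨t, ht, hst⟩ : ∃ t : ℝ, 0 < t ∧ s * t = 1 := ⟨s⁻¹, by positivity, by field_simp⟩
  have h3 : α₃ ^ 2 ≤ 1 := by nlinarith [sq_nonneg α₁, sq_nonneg α₂]
  have h3a : -1 ≤ α₃ := by nlinarith
  have h3b : α₃ ≤ 1 := by nlinarith
  have hA : 0 < s * (1 + α₃) + t * (1 - α₃) := by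
    rcases le_or_gt α₃ 0 with h | h
    · have := mul_nonneg hs.le (by linarith : 0 ≤ 1 + α₃)
      have := mul_pos ht (by linarith : 0 < 1 - α₃)
      linarith
    · have := mul_pos hs (by linarith : 0 < 1 + α₃)
      have := mul_nonneg ht.le (by linarith : 0 ≤ 1 - α₃)
      linarith
  have hD : (s * (1 + α₃) + t * (1 - α₃)) * (s * (1 - α₃) + t * (1 + α₃)) -
      (((s - t) * α₁) ^ 2 + ((s - t) * α₂) ^ 2) = 4 := by
    linear_combination (-(s - t) ^ 2) * hsphere + 4 * hst
  obtain ⟨⟨a, b, c, d⟩, hv, hpos, hle⟩ := hform_hermite _ _ _ _ 4 hA (by norm_num) hD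
  refine ⟨a ^ 2 + b ^ 2 + c ^ 2 + d ^ 2, 2 * (a * c + b * d), 2 * (b * c - a * d),
    a ^ 2 + b ^ 2 - c ^ 2 - d ^ 2, ?_, by ring, ?_⟩
  · by_contra hcon
    have y1 : a ^ 2 = 0 := by nlinarith [sq_nonneg a, sq_nonneg b, sq_nonneg c, sq_nonneg d]
    have y2 : b ^ 2 = 0 := by nlinarith [sq_nonneg a, sq_nonneg b, sq_nonneg c, sq_nonneg d]
    have y3 : c ^ 2 = 0 := by nlinarith [sq_nonneg a, sq_nonneg b, sq_nonneg c, sq_nonneg d]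
    have y4 : d ^ 2 = 0 := by nlinarith [sq_nonneg a, sq_nonneg b, sq_nonneg c, sq_nonneg d]
    simp at y1 y2 y3 y4
    apply hv
    simp [y1, y2, y3, y4]
  · push_cast
    set Q : ℝ := (a : ℝ) ^ 2 + b ^ 2 + c ^ 2 + d ^ 2 with hQ
    set L : ℝ := α₁ * (2 * (a * c + b * d)) + α₂ * (2 * (b * c - a * d)) +
      α₃ * ((a : ℝ) ^ 2 + b ^ 2 - c ^ 2 - d ^ 2) with hL
    have hf : hform (s * (1 + α₃) + t * (1 - α₃)) (s * (1 - α₃) + t * (1 + α₃))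
        ((s - t) * α₁) ((s - t) * α₂) (a, b, c, d) = s * (Q + L) + t * (Q - L) := by
      simp only [hform, hQ, hL]
      ring
    rw [hf] at hle hpos
    have hLQ : L ^ 2 ≤ Q ^ 2 := by
      have e : Q ^ 2 = (2 * (a * c + b * d) : ℝ) ^ 2 + (2 * (b * c - a * d)) ^ 2 +
        ((a : ℝ) ^ 2 + b ^ 2 - c ^ 2 - d ^ 2) ^ 2 := by
        rw [hQ]
        ring
      rw [e, hL]
      generalize (2 * (a * c + b * d) : ℝ) = x
      generalize (2 * (b * c - a * d) : ℝ) = y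
      generalize ((a : ℝ) ^ 2 + b ^ 2 - c ^ 2 - d ^ 2) = z
      have := sq_nonneg (α₁ * y - α₂ * x)
      have := sq_nonneg (α₁ * z - α₃ * x)
      have := sq_nonneg (α₂ * z - α₃ * y)
      have e2 : x ^ 2 + y ^ 2 + z ^ 2 = (α₁ ^ 2 + α₂ ^ 2 + α₃ ^ 2) * (x ^ 2 + y ^ 2 + z ^ 2) := by
        rw [hsphere, one_mul]
      have e3 : (α₁ ^ 2 + α₂ ^ 2 + α₃ ^ 2) * (x ^ 2 + y ^ 2 + z ^ 2) =
        (α₁ * x + α₂ * y + α₃ * z) ^ 2 + (α₁ * y - α₂ * x) ^ 2 + (α₁ * z - α₃ * x) ^ 2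
          + (α₂ * z - α₃ * y) ^ 2 := by ring
      linarith
    have hQ0 : 0 ≤ Q := by positivity
    obtain ⟨hl1, hl2⟩ := abs_le_of_sq_le_sq' hLQ hQ0
    have hP : 0 ≤ Q + L := by linarith
    have hN : 0 ≤ Q - L := by linarith
    generalize Q + L = P at *
    generalize Q - L = N at *
    have hsP := mul_nonneg hs.le hP
    have htN := mul_nonneg ht.le hN
    have h3' : s * P + t * N ≤ 3 := by nlinarith
    constructor
    · have : s * (t * N) ≤ s * 3 := mul_le_mul_of_nonneg_left (by linarith) hs.le
      have e : s * (t * N) = N := by rw [← mul_assoc, hst, one_mul]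
      linarith
    · have e : (s * P) * (t * N) = P * N := by linear_combination (P * N) * hst
      have e4 : (s * P + t * N) ^ 2 = (s * P - t * N) ^ 2 + 4 * ((s * P) * (t * N)) := by ring
      have := sq_nonneg (s * P - t * N)
      linarith


theorem stmt_5 (α₁ α₂ α₃ : ℝ) (hsphere : α₁ ^ 2 + α₂ ^ 2 + α₃ ^ 2 = 1)
    (hirr : ¬ (∃ r₁ r₂ r₃ : ℚ, α₁ = (r₁ : ℝ) ∧ α₂ = (r₂ : ℝ) ∧ α₃ = (r₃ : ℝ)))
    (ε : ℝ) (hε : 0 < ε) :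
    {p : ℤ × ℤ × ℤ × ℤ | 1 ≤ p.1 ∧
      p.2.1 ^ 2 + p.2.2.1 ^ 2 + p.2.2.2 ^ 2 = p.1 ^ 2 ∧
      Real.sqrt ((α₁ - (p.2.1 : ℝ) / (p.1 : ℝ)) ^ 2 + (α₂ - (p.2.2.1 : ℝ) / (p.1 : ℝ)) ^ 2 +
          (α₃ - (p.2.2.2 : ℝ) / (p.1 : ℝ)) ^ 2)
        < (2 * Real.sqrt (3 / Real.pi) + ε) / (p.1 : ℝ)}.Infinite := by

  have dist_eq : ∀ Q A₁ A₂ A₃ : ℤ, 1 ≤ Q → A₁ ^ 2 + A₂ ^ 2 + A₃ ^ 2 = Q ^ 2 →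
      (α₁ - (A₁ : ℝ) / Q) ^ 2 + (α₂ - (A₂ : ℝ) / Q) ^ 2 + (α₃ - (A₃ : ℝ) / Q) ^ 2 =
        2 * Q * ((Q : ℝ) - (α₁ * A₁ + α₂ * A₂ + α₃ * A₃)) / (Q : ℝ) ^ 2 := by
    intro Q A₁ A₂ A₃ hQ hA
    have hQ' : (0 : ℝ) < Q := by exact_mod_cast hQ
    have hA' : (A₁ : ℝ) ^ 2 + (A₂ : ℝ) ^ 2 + (A₃ : ℝ) ^ 2 = (Q : ℝ) ^ 2 := by exact_mod_cast hA
    rw [eq_div_iff (by positivity)]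
    have e : ∀ x y : ℝ, (x - y / Q) ^ 2 * (Q : ℝ) ^ 2 = (x * Q - y) ^ 2 := by
      intro x y
      rw [← mul_pow]
      congr 1
      field_simp
    rw [add_mul, add_mul, e, e, e]
    linear_combination (Q : ℝ) ^ 2 * hsphere + hA'
  have Npos : ∀ Q A₁ A₂ A₃ : ℤ, 1 ≤ Q → A₁ ^ 2 + A₂ ^ 2 + A₃ ^ 2 = Q ^ 2 →
      0 < (Q : ℝ) - (α₁ * A₁ + α₂ * A₂ + α₃ * A₃) := by
    intro Q A₁ A₂ A₃ hQ hA
    have hQ' : (0 : ℝ) < Q := by exact_mod_cast hQ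
    by_contra hcon
    push Not at hcon
    have h := dist_eq Q A₁ A₂ A₃ hQ hA
    have h2 : 2 * Q * ((Q : ℝ) - (α₁ * A₁ + α₂ * A₂ + α₃ * A₃)) / (Q : ℝ) ^ 2 ≤ 0 := by
      apply div_nonpos_of_nonpos_of_nonneg _ (by positivity)
      exact mul_nonpos_of_nonneg_of_nonpos (by positivity) hcon
    rw [← h] at h2
    have n1 := sq_nonneg (α₁ - (A₁ : ℝ) / Q)
    have n2 := sq_nonneg (α₂ - (A₂ : ℝ) / Q)
    have n3 := sq_nonneg (α₃ - (A₃ : ℝ) / Q)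
    have z1 : (α₁ - (A₁ : ℝ) / Q) = 0 := pow_eq_zero_iff (two_ne_zero) |>.1 (by linarith)
    have z2 : (α₂ - (A₂ : ℝ) / Q) = 0 := pow_eq_zero_iff (two_ne_zero) |>.1 (by linarith)
    have z3 : (α₃ - (A₃ : ℝ) / Q) = 0 := pow_eq_zero_iff (two_ne_zero) |>.1 (by linarith)
    apply hirr
    refine ⟨(A₁ : ℚ) / Q, (A₂ : ℚ) / Q, (A₃ : ℚ) / Q, ?_, ?_, ?_⟩ <;> push_cast <;> linarith
  intro hfin
  set F : ℤ × ℤ × ℤ × ℤ → ℝ :=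
    fun p => (p.1 : ℝ) - (α₁ * p.2.1 + α₂ * p.2.2.1 + α₃ * p.2.2.2) with hF
  obtain ⟨δ, hδ, hδF⟩ : ∃ δ : ℝ, 0 < δ ∧ ∀ p ∈ {p : ℤ × ℤ × ℤ × ℤ | 1 ≤ p.1 ∧
      p.2.1 ^ 2 + p.2.2.1 ^ 2 + p.2.2.2 ^ 2 = p.1 ^ 2 ∧
      Real.sqrt ((α₁ - (p.2.1 : ℝ) / (p.1 : ℝ)) ^ 2 + (α₂ - (p.2.2.1 : ℝ) / (p.1 : ℝ)) ^ 2 +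
          (α₃ - (p.2.2.2 : ℝ) / (p.1 : ℝ)) ^ 2)
        < (2 * Real.sqrt (3 / Real.pi) + ε) / (p.1 : ℝ)}, δ ≤ F p := by
    rcases Set.eq_empty_or_nonempty {p : ℤ × ℤ × ℤ × ℤ | 1 ≤ p.1 ∧
      p.2.1 ^ 2 + p.2.2.1 ^ 2 + p.2.2.2 ^ 2 = p.1 ^ 2 ∧
      Real.sqrt ((α₁ - (p.2.1 : ℝ) / (p.1 : ℝ)) ^ 2 + (α₂ - (p.2.2.1 : ℝ) / (p.1 : ℝ)) ^ 2 +
          (α₃ - (p.2.2.2 : ℝ) / (p.1 : ℝ)) ^ 2)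
        < (2 * Real.sqrt (3 / Real.pi) + ε) / (p.1 : ℝ)} with he | hne
    · refine ⟨1, one_pos, fun p hp => ?_⟩
      rw [he] at hp
      exact hp.elim
    · obtain ⟨p0, hp0, hmin⟩ := Set.exists_min_image _ F hfin hne
      exact ⟨F p0, Npos _ _ _ _ hp0.1 hp0.2.1, hmin⟩
  obtain ⟨Q, A₁, A₂, A₃, hQ, hA, hN, hPN⟩ :=
    approx_one α₁ α₂ α₃ hsphere (min (δ / 6) (1 / 3)) (by positivity)
  have hNpos := Npos Q A₁ A₂ A₃ hQ hA
  have hQ' : (0 : ℝ) < Q := by exact_mod_cast hQ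
  have hN1 : (Q : ℝ) - (α₁ * A₁ + α₂ * A₂ + α₃ * A₃) ≤ 1 := by
    linarith [min_le_right (δ / 6) (1 / 3 : ℝ)]
  have hNδ : (Q : ℝ) - (α₁ * A₁ + α₂ * A₂ + α₃ * A₃) < δ := by
    linarith [min_le_left (δ / 6) (1 / 3 : ℝ)]
  have hmem := hδF (Q, A₁, A₂, A₃) ⟨hQ, hA, ?_⟩
  · simp only [hF] at hmem
    linarith
  · simp only
    rw [dist_eq Q A₁ A₂ A₃ hQ hA, Real.sqrt_div' _ (by positivity), Real.sqrt_sq hQ'.le]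
    apply div_lt_div_of_pos_right _ hQ'
    have hb : 2 * Q * ((Q : ℝ) - (α₁ * A₁ + α₂ * A₂ + α₃ * A₃)) ≤ 3 := by nlinarith
    have hs1 : Real.sqrt (2 * Q * ((Q : ℝ) - (α₁ * A₁ + α₂ * A₂ + α₃ * A₃)))
        ≤ 2 * Real.sqrt (3 / Real.pi) := by
      have e : 2 * Real.sqrt (3 / Real.pi) = Real.sqrt (4 * (3 / Real.pi)) := by
        rw [Real.sqrt_mul (by norm_num), show (4 : ℝ) = 2 ^ 2 by norm_num,
          Real.sqrt_sq (by norm_num)]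
      rw [e]
      apply Real.sqrt_le_sqrt
      refine hb.trans ?_
      rw [← mul_div_assoc, le_div_iff₀ Real.pi_pos]
      linarith [Real.pi_lt_four]
    linarith
end

section
/- Let 0 < γ ≤ 1 and let (z, y, x₁, x₂) ∈ ℝ⁴ satisfy |z + y| < 2 and ((z − y)/2)² + (x₁/γ)² + (x₂/γ)² < 1. Then |zy − x₁² − x₂²| < 1. That is, the convex body 𝔎 = {(z,y,x₁,x₂) : |z+y| < 2, ((z−y)/2)² + (x₁/γ)² + (x₂/γ)² < 1} is contained in the body 𝔓 = {(z,y,x₁,x₂) : |zy − x₁² − x₂²| < 1}. -/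
theorem stmt_8 (γ : ℝ) (hγ0 : 0 < γ) (hγ1 : γ ≤ 1) (z y x₁ x₂ : ℝ)
    (h1 : |z + y| < 2)
    (h2 : ((z - y) / 2) ^ 2 + (x₁ / γ) ^ 2 + (x₂ / γ) ^ 2 < 1) :
    |z * y - x₁ ^ 2 - x₂ ^ 2| < 1 := by
  have key : ∀ x : ℝ, x ^ 2 ≤ (x / γ) ^ 2 := by
    intro x
    rw [div_pow, le_div_iff₀ (by positivity)]
    have h : γ ^ 2 ≤ 1 := by nlinarith
    nlinarith [sq_nonneg x]
  have k1 := key x₁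
  have k2 := key x₂
  obtain ⟨ha, hb⟩ := abs_lt.mp h1
  have hs : (z + y) ^ 2 < 4 := by nlinarith
  rw [abs_lt]
  constructor
  · nlinarith [sq_nonneg (z + y)]
  · nlinarith [sq_nonneg (z - y), sq_nonneg x₁, sq_nonneg x₂]
end

section
/- Let q ≥ 1, b₁, b₂ be integers such that q divides b₁² + b₂². Then q divides each of 2b₁q, 2b₂q, q² − b₁² − b₂², and q² + b₁² + b₂²; consequently, writing N = q² + b₁² + b₂², the rational point (2b₁q/N, 2b₂q/N, (q² − b₁² − b₂²)/N) on the unit sphere, written in lowest terms as (A₁/Q, A₂/Q, A₃/Q) with gcd(Q, A₁, A₂, A₃) = 1, has denominator Q ≤ N/q = q + (b₁² + b₂²)/q. -/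
theorem stmt_12 (q b₁ b₂ : ℤ) (hq : 1 ≤ q) (hdvd : q ∣ b₁ ^ 2 + b₂ ^ 2) :
    q ∣ 2 * b₁ * q ∧ q ∣ 2 * b₂ * q ∧
    q ∣ q ^ 2 - b₁ ^ 2 - b₂ ^ 2 ∧ q ∣ q ^ 2 + b₁ ^ 2 + b₂ ^ 2 ∧
    ∀ Q A₁ A₂ A₃ : ℤ, 1 ≤ Q → Int.gcd Q (Int.gcd A₁ (Int.gcd A₂ A₃)) = 1 →
      (A₁ : ℚ) / (Q : ℚ) = (2 * b₁ * q : ℤ) / ((q ^ 2 + b₁ ^ 2 + b₂ ^ 2 : ℤ) : ℚ) →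
      (A₂ : ℚ) / (Q : ℚ) = (2 * b₂ * q : ℤ) / ((q ^ 2 + b₁ ^ 2 + b₂ ^ 2 : ℤ) : ℚ) →
      (A₃ : ℚ) / (Q : ℚ) = ((q ^ 2 - b₁ ^ 2 - b₂ ^ 2 : ℤ) : ℚ) / ((q ^ 2 + b₁ ^ 2 + b₂ ^ 2 : ℤ) : ℚ) →
      (Q : ℚ) ≤ ((q ^ 2 + b₁ ^ 2 + b₂ ^ 2 : ℤ) : ℚ) / (q : ℚ) := by
  obtain ⟨k, hk⟩ := hdvd
  have e1 : q ^ 2 - b₁ ^ 2 - b₂ ^ 2 = q * (q - k) := by linear_combination -hk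
  have e2 : q ^ 2 + b₁ ^ 2 + b₂ ^ 2 = q * (q + k) := by linear_combination hk
  refine ⟨⟨2 * b₁, by ring⟩, ⟨2 * b₂, by ring⟩, ⟨_, e1⟩, ⟨_, e2⟩, ?_⟩
  intro Q A₁ A₂ A₃ hQ hg h1 h2 h3
  have hN : 0 < q * (q + k) := by rw [← e2]; positivity
  have hM : 0 < q + k := pos_of_mul_pos_right hN (by omega)
  have hq0 : q ≠ 0 := by omega
  rw [e2] at h1 h2 h3 ⊢
  rw [e1] at h3
  have key : ∀ A c : ℤ, (A : ℚ) / (Q : ℚ) = ((q * c : ℤ) : ℚ) / ((q * (q + k) : ℤ) : ℚ) →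
      Q ∣ A * (q + k) := by
    intro A c h
    rw [div_eq_div_iff (by exact_mod_cast (by omega : Q ≠ 0)) (by exact_mod_cast hN.ne')] at h
    have h' : A * (q * (q + k)) = q * c * Q := by exact_mod_cast h
    refine ⟨c, mul_left_cancel₀ hq0 ?_⟩
    linear_combination h'
  have k1 := key A₁ (2 * b₁) (by rw [h1, mul_comm q (2 * b₁)])
  have k2 := key A₂ (2 * b₂) (by rw [h2, mul_comm q (2 * b₂)])
  have k3 := key A₃ _ h3
  have comb : ∀ A B : ℤ, Q ∣ A * (q + k) → Q ∣ B * (q + k) →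
      Q ∣ (Int.gcd A B : ℤ) * (q + k) := by
    intro A B hA hB
    rw [Int.gcd_eq_gcd_ab]
    have := dvd_add (hA.mul_right (Int.gcdA A B)) (hB.mul_right (Int.gcdB A B))
    rw [add_mul]
    rwa [mul_right_comm A, mul_right_comm B] at this
  have k4 := comb _ _ k1 (comb _ _ k2 k3)
  have hd : Q ∣ q + k := (Int.isCoprime_iff_gcd_eq_one.mpr hg).dvd_of_dvd_mul_left k4
  have hle := Int.le_of_dvd hM hd
  have hqq : (0 : ℚ) < q := by exact_mod_cast (by omega : 0 < q)
  rw [le_div_iff₀ hqq]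
  have : Q * q ≤ q * (q + k) := by nlinarith
  exact_mod_cast this
end
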